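/- arXiv:0711.1913 — 11 statements merged into one kernel-verified Lean document; each statement's English description precedes it below -/
import Mathlib

section
/- Let d ≥ 1, let Ψ : ℝ^d → ℂ be measurable with Re Ψ(ξ) ≥ 0 for every ξ, and let f : ℝ^d → [0,∞) be measurable. Then for every t ≥ 0 and every λ > 0, ((1 − e^{−2t/λ})/2) · ∫_{ℝ^d} f(ξ)/((1/λ) + Re Ψ(ξ)) dξ ≤ ∫_0^t ∫_{ℝ^d} e^{−2s·Re Ψ(ξ)} f(ξ) dξ ds ≤ (e^{2t/λ}/2) · ∫_{ℝ^d} f(ξ)/((1/λ) + Re Ψ(ξ)) dξ, where all integrals are taken in the extended nonnegative sense. -/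
open MeasureTheory

/-!
For a rate `r ≥ 0` and a damping `γ > 0`, the damped exponential satisfies
`e^{-(γ + r)s} ≤ e^{-rs} ≤ e^{γt} e^{-(γ + r)s}` for `0 ≤ s ≤ t`, and `∫_0^t e^{-(γ + r)s} ds` is
`(1 - e^{-(γ + r)t}) / (γ + r)`, which lies between `(1 - e^{-γt}) / (γ + r)` and `1 / (γ + r)`.
Taking `γ = 2/λ` and `r = 2 Re Ψ(ξ)`, Tonelli's theorem integrates these bounds against `f(ξ) dξ`.
-/

section ExponentialIntegral

open Real

variable {γ r t : ℝ}

lemma integral_exp_neg_mul (hr : r ≠ 0) (t : ℝ) :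
    ∫ s in 0..t, exp (-(r * s)) = (1 - exp (-(r * t))) / r := by
  rw [intervalIntegral.integral_comp_mul_left (fun s ↦ exp (-s)) hr]
  simp [div_eq_inv_mul]

lemma one_sub_exp_neg_div_add_le_integral_exp_neg (hγ : 0 < γ) (hr : 0 ≤ r) (ht : 0 ≤ t) :
    (1 - exp (-(γ * t))) / (γ + r) ≤ ∫ s in 0..t, exp (-(r * s)) :=
  calc (1 - exp (-(γ * t))) / (γ + r)
      ≤ (1 - exp (-((γ + r) * t))) / (γ + r) := by
        gcongr
        linarith
    _ = ∫ s in 0..t, exp (-((γ + r) * s)) := (integral_exp_neg_mul (by positivity) t).symm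
    _ ≤ ∫ s in 0..t, exp (-(r * s)) := by
        refine intervalIntegral.integral_mono_on ht
          (Continuous.intervalIntegrable (by fun_prop) 0 t)
          (Continuous.intervalIntegrable (by fun_prop) 0 t) fun s hs ↦ ?_
        have hs0 : 0 ≤ s := hs.1
        gcongr
        linarith

lemma integral_exp_neg_le_exp_div_add (hγ : 0 ≤ γ) (hγr : 0 < γ + r) (ht : 0 ≤ t) :
    ∫ s in 0..t, exp (-(r * s)) ≤ exp (γ * t) / (γ + r) :=
  calc ∫ s in 0..t, exp (-(r * s))
      ≤ ∫ s in 0..t, exp (γ * t) * exp (-((γ + r) * s)) := by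
        refine intervalIntegral.integral_mono_on ht
          (Continuous.intervalIntegrable (by fun_prop) 0 t)
          (Continuous.intervalIntegrable (by fun_prop) 0 t) fun s hs ↦ ?_
        have hγs : γ * s ≤ γ * t := mul_le_mul_of_nonneg_left hs.2 hγ
        rw [← exp_add]
        gcongr
        linarith
    _ = exp (γ * t) * ((1 - exp (-((γ + r) * t))) / (γ + r)) := by
        rw [intervalIntegral.integral_const_mul, integral_exp_neg_mul hγr.ne']
    _ ≤ exp (γ * t) * (1 / (γ + r)) := by
        gcongr
        exact sub_le_self _ (exp_nonneg _)
    _ = exp (γ * t) / (γ + r) := mul_one_div _ _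

end ExponentialIntegral

section Tonelli

variable {X : Type*} [MeasurableSpace X] {μ : Measure X}

lemma lintegral_Ioc_lintegral_exp_neg_mul [SFinite μ] {r : X → ℝ} (hr : AEMeasurable r μ) {t : ℝ}
    (ht : 0 ≤ t) :
    ∫⁻ s in Set.Ioc 0 t, ∫⁻ x, ENNReal.ofReal (Real.exp (-(r x * s))) ∂μ =
      ∫⁻ x, ENNReal.ofReal (∫ s in 0..t, Real.exp (-(r x * s))) ∂μ := by
  have hmeas : AEMeasurable (fun p : ℝ × X ↦ ENNReal.ofReal (Real.exp (-(r p.2 * p.1))))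
      ((volume.restrict (Set.Ioc 0 t)).prod μ) := by
    have := hr.comp_snd (μ := volume.restrict (Set.Ioc 0 t))
    fun_prop
  rw [lintegral_lintegral_swap hmeas]
  refine lintegral_congr fun x ↦ ?_
  have hint : IntervalIntegrable (fun s ↦ Real.exp (-(r x * s))) volume 0 t :=
    Continuous.intervalIntegrable (by fun_prop) 0 t
  rw [intervalIntegral.integral_of_le ht, ofReal_integral_eq_lintegral_ofReal hint.1
    (.of_forall fun s ↦ Real.exp_nonneg _)]

lemma lintegral_withDensity_ofReal {f : X → ℝ} (hf : AEMeasurable f μ) (hf0 : ∀ᵐ x ∂μ, 0 ≤ f x)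
    (g : X → ℝ) :
    ∫⁻ x, ENNReal.ofReal (g x) ∂μ.withDensity (fun x ↦ ENNReal.ofReal (f x)) =
      ∫⁻ x, ENNReal.ofReal (g x * f x) ∂μ := by
  rw [lintegral_withDensity_eq_lintegral_mul_non_measurable₀ μ hf.ennreal_ofReal
    (.of_forall fun _ ↦ ENNReal.ofReal_lt_top)]
  refine lintegral_congr_ae (hf0.mono fun x hx ↦ ?_)
  simp only [Pi.mul_apply, mul_comm (ENNReal.ofReal (f x)), ENNReal.ofReal_mul' hx]

end Tonelli

/-- The measure `ν` plays the role of the weighted measure `f(ξ) dξ`, and `a` that of `Re Ψ`. -/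
theorem stmt_0_general {X : Type*} [MeasurableSpace X] {ν : Measure X} [SFinite ν] {a : X → ℝ}
    (ha : AEMeasurable a ν) (ha0 : ∀ᵐ x ∂ν, 0 ≤ a x) {t lam : ℝ} (ht : 0 ≤ t) (hlam : 0 < lam) :
    ENNReal.ofReal ((1 - Real.exp (-2 * t / lam)) / 2) *
        (∫⁻ x, ENNReal.ofReal (1 / (1 / lam + a x)) ∂ν)
      ≤ ∫⁻ s in Set.Ioc (0 : ℝ) t, ∫⁻ x, ENNReal.ofReal (Real.exp (-2 * s * a x)) ∂ν ∧
    (∫⁻ s in Set.Ioc (0 : ℝ) t, ∫⁻ x, ENNReal.ofReal (Real.exp (-2 * s * a x)) ∂ν)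
      ≤ ENNReal.ofReal (Real.exp (2 * t / lam) / 2) *
          (∫⁻ x, ENNReal.ofReal (1 / (1 / lam + a x)) ∂ν) := by
  have hγ : 0 < 2 / lam := by positivity
  have rate_eq (s x) : -2 * s * a x = -(2 * a x * s) := by ring
  have scale_eq (c b : ℝ) : c / 2 * (1 / (1 / lam + b)) = c / (2 / lam + 2 * b) := by
    rw [div_mul_div_comm, mul_one, mul_add, mul_one_div]
  have neg_damping_eq : -2 * t / lam = -(2 / lam * t) := by ring
  have damping_eq : 2 * t / lam = 2 / lam * t := by ring
  simp_rw [rate_eq, neg_damping_eq, damping_eq]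
  rw [lintegral_Ioc_lintegral_exp_neg_mul (ha.const_mul 2) ht,
    ← lintegral_const_mul' _ _ ENNReal.ofReal_ne_top,
    ← lintegral_const_mul' _ _ ENNReal.ofReal_ne_top]
  constructor <;> refine lintegral_mono_ae (ha0.mono fun x hx ↦ ?_) <;>
    rw [← ENNReal.ofReal_mul' (by positivity), scale_eq] <;> apply ENNReal.ofReal_le_ofReal
  · exact one_sub_exp_neg_div_add_le_integral_exp_neg hγ (by positivity) ht
  · exact integral_exp_neg_le_exp_div_add hγ.le (by positivity) ht

/-- Proposition 3.1 (heat quasi-isometry), analytic content: for measurable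
`Ψ : ℝ^d → ℂ` with `Re Ψ ≥ 0` and measurable `f ≥ 0`, for every `t ≥ 0` and `λ > 0`,
`((1 − e^{−2t/λ})/2) ⬝ ∫ f/((1/λ) + Re Ψ) ≤ ∫_0^t ∫ e^{−2s Re Ψ} f dξ ds
  ≤ (e^{2t/λ}/2) ⬝ ∫ f/((1/λ) + Re Ψ)`. -/
theorem stmt_0 (d : ℕ) (hd : 1 ≤ d)
    (Ψ : EuclideanSpace ℝ (Fin d) → ℂ) (hΨ : Measurable Ψ)
    (hre : ∀ ξ, 0 ≤ (Ψ ξ).re)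
    (f : EuclideanSpace ℝ (Fin d) → ℝ) (hf : Measurable f) (hf0 : ∀ ξ, 0 ≤ f ξ)
    (t lam : ℝ) (ht : 0 ≤ t) (hlam : 0 < lam) :
    ENNReal.ofReal ((1 - Real.exp (-2 * t / lam)) / 2) *
        (∫⁻ ξ, ENNReal.ofReal (f ξ / (1 / lam + (Ψ ξ).re)))
      ≤ ∫⁻ s in Set.Ioc (0 : ℝ) t,
          ∫⁻ ξ, ENNReal.ofReal (Real.exp (-2 * s * (Ψ ξ).re) * f ξ) ∧
    (∫⁻ s in Set.Ioc (0 : ℝ) t,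
        ∫⁻ ξ, ENNReal.ofReal (Real.exp (-2 * s * (Ψ ξ).re) * f ξ))
      ≤ ENNReal.ofReal (Real.exp (2 * t / lam) / 2) *
          (∫⁻ ξ, ENNReal.ofReal (f ξ / (1 / lam + (Ψ ξ).re))) := by
  simpa only [lintegral_withDensity_ofReal hf.aemeasurable (.of_forall hf0), one_div_mul_eq_div]
    using stmt_0_general
      (ν := volume.withDensity fun ξ ↦ ENNReal.ofReal (f ξ)) (a := fun ξ ↦ (Ψ ξ).re)
      (Complex.measurable_re.comp hΨ).aemeasurable (.of_forall hre) ht hlam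
end

section
/- Let d ≥ 1, let Ψ : ℝ^d → ℂ be measurable with Re Ψ(ξ) ≥ 0 for every ξ, and let f : ℝ^d → [0,∞) be measurable. Then for every t > 0, (1/3) · ∫_{ℝ^d} f(ξ)/((1/t) + Re Ψ(ξ)) dξ ≤ ∫_0^t ∫_{ℝ^d} e^{−2s·Re Ψ(ξ)} f(ξ) dξ ds ≤ 4 · ∫_{ℝ^d} f(ξ)/((1/t) + Re Ψ(ξ)) dξ. -/
open MeasureTheory

/-!
After Tonelli, everything reduces to comparing `I = ∫₀ᵗ e^{-2sa} ds` with `(1/t + a)⁻¹` for a fixed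
`a = Re Ψ(ξ) ≥ 0`. Since `2aI = 1 - e^{-2ta}`, we have `I * (1/t + a) = I/t + (1 - e^{-2ta})/2`.
The mean `I/t` of the decreasing convex function `s ↦ e^{-2sa}` lies between its last value
`e^{-2ta}` and the trapezoidal value `(1 + e^{-2ta})/2`, so `1/2 ≤ I * (1/t + a) ≤ 1`. Both
constants are optimal: `1/2` is the limit as `ta → ∞`, and `1` is attained at `a = 0`.
-/

open scoped ENNReal

section IntervalIntegral

variable {g : ℝ → ℝ} {a b : ℝ}

lemma sub_mul_le_intervalIntegral_of_antitoneOn (hab : a ≤ b) (hg : AntitoneOn g (Set.Icc a b)) :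
    (b - a) * g b ≤ ∫ x in a..b, g x := by
  have hg_int : IntervalIntegrable g volume a b :=
    AntitoneOn.intervalIntegrable (by rwa [Set.uIcc_of_le hab])
  calc (b - a) * g b = ∫ _ in a..b, g b := by simp
    _ ≤ ∫ x in a..b, g x := intervalIntegral.integral_mono_on hab (by simp) hg_int
        fun x hx => hg hx (Set.right_mem_Icc.2 hab) hx.2

lemma add_map_reflect_le_of_convexOn (hg : ConvexOn ℝ (Set.Icc a b) g) {x : ℝ}
    (hx : x ∈ Set.Icc a b) : g x + g (a + b - x) ≤ g a + g b := by
  have hab : a ≤ b := hx.1.trans hx.2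
  have ha : a ∈ Set.Icc a b := Set.left_mem_Icc.2 hab
  have hb : b ∈ Set.Icc a b := Set.right_mem_Icc.2 hab
  obtain ⟨p, q, hp, hq, hpq, rfl⟩ : x ∈ segment ℝ a b := by rwa [segment_eq_Icc hab]
  have hreflect : a + b - (p • a + q • b) = q • a + p • b := by
    obtain rfl : q = 1 - p := by linarith
    simp only [smul_eq_mul]
    ring
  calc g (p • a + q • b) + g (a + b - (p • a + q • b))
      ≤ (p • g a + q • g b) + (q • g a + p • g b) := by
        rw [hreflect]
        exact add_le_add (hg.2 ha hb hp hq hpq) (hg.2 ha hb hq hp (by rwa [add_comm]))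
    _ = (p + q) * (g a + g b) := by simp only [smul_eq_mul]; ring
    _ = g a + g b := by rw [hpq, one_mul]

lemma intervalIntegral_le_trapezoid_of_convexOn (hab : a ≤ b) (hg : ConvexOn ℝ (Set.Icc a b) g)
    (hg_int : IntervalIntegrable g volume a b) :
    ∫ x in a..b, g x ≤ (b - a) * ((g a + g b) / 2) := by
  have hreflect_int : IntervalIntegrable (fun x => g (a + b - x)) volume a b := by
    simpa using (hg_int.comp_sub_left (a + b)).symm
  have hreflect : ∫ x in a..b, g (a + b - x) = ∫ x in a..b, g x := by simp
  have hle : ∫ x in a..b, (g x + g (a + b - x)) ≤ ∫ _ in a..b, (g a + g b) :=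
    intervalIntegral.integral_mono_on hab (hg_int.add hreflect_int) (by simp)
      fun _ => add_map_reflect_le_of_convexOn hg
  rw [intervalIntegral.integral_add hg_int hreflect_int, hreflect,
    intervalIntegral.integral_const, smul_eq_mul] at hle
  linarith

end IntervalIntegral

section ExponentialDecay

variable {a t : ℝ}

lemma antitone_exp_neg_two_mul_mul (ha : 0 ≤ a) : Antitone fun s : ℝ => Real.exp (-2 * s * a) :=
  fun s r hsr => Real.exp_le_exp.2 (by linarith [mul_le_mul_of_nonneg_right hsr ha])

lemma convexOn_exp_neg_two_mul_mul (a : ℝ) :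
    ConvexOn ℝ Set.univ fun s : ℝ => Real.exp (-2 * s * a) := by
  have h := convexOn_exp.comp_linearMap (LinearMap.mul ℝ ℝ (-2 * a))
  simpa only [Set.preimage_univ, Function.comp_def, LinearMap.mul_apply', mul_right_comm] using h

lemma intervalIntegrable_exp_neg_two_mul_mul (a t : ℝ) :
    IntervalIntegrable (fun s : ℝ => Real.exp (-2 * s * a)) volume 0 t :=
  Continuous.intervalIntegrable (by fun_prop) 0 t

lemma mul_integral_exp_neg_two_mul_mul (a t : ℝ) :
    a * ∫ s in (0 : ℝ)..t, Real.exp (-2 * s * a) = (1 - Real.exp (-2 * t * a)) / 2 := by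
  have h := intervalIntegral.mul_integral_comp_mul_left (f := Real.exp) (a := 0) (b := t) (-2 * a)
  simp only [integral_exp, mul_right_comm (-2) a, mul_zero, zero_mul, Real.exp_zero] at h
  linarith

lemma integral_exp_mul_one_div_add (a t : ℝ) :
    (∫ s in (0 : ℝ)..t, Real.exp (-2 * s * a)) * (1 / t + a) =
      (∫ s in (0 : ℝ)..t, Real.exp (-2 * s * a)) / t + (1 - Real.exp (-2 * t * a)) / 2 := by
  rw [← mul_integral_exp_neg_two_mul_mul]
  ring

lemma half_mul_inv_le_integral_exp (ht : 0 < t) (ha : 0 ≤ a) :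
    2⁻¹ * (1 / t + a)⁻¹ ≤ ∫ s in (0 : ℝ)..t, Real.exp (-2 * s * a) := by
  have hmean : Real.exp (-2 * t * a) ≤ (∫ s in (0 : ℝ)..t, Real.exp (-2 * s * a)) / t := by
    rw [le_div_iff₀' ht]
    simpa using sub_mul_le_intervalIntegral_of_antitoneOn ht.le
      ((antitone_exp_neg_two_mul_mul ha).antitoneOn _)
  rw [← div_eq_mul_inv, div_le_iff₀ (by positivity), integral_exp_mul_one_div_add]
  linarith [Real.exp_pos (-2 * t * a)]

lemma integral_exp_le_inv (ht : 0 < t) (hta : 0 < 1 / t + a) :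
    ∫ s in (0 : ℝ)..t, Real.exp (-2 * s * a) ≤ (1 / t + a)⁻¹ := by
  have hmean : (∫ s in (0 : ℝ)..t, Real.exp (-2 * s * a)) / t ≤
      (1 + Real.exp (-2 * t * a)) / 2 := by
    rw [div_le_iff₀' ht]
    simpa using intervalIntegral_le_trapezoid_of_convexOn ht.le
      ((convexOn_exp_neg_two_mul_mul a).subset (Set.subset_univ _) (convex_Icc 0 t))
      (intervalIntegrable_exp_neg_two_mul_mul a t)
  rw [← one_div, le_div_iff₀ hta, integral_exp_mul_one_div_add]
  linarith

lemma setLIntegral_exp_eq_ofReal_integral (a : ℝ) (ht : 0 ≤ t) :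
    ∫⁻ s in Set.Ioc (0 : ℝ) t, ENNReal.ofReal (Real.exp (-2 * s * a)) =
      ENNReal.ofReal (∫ s in (0 : ℝ)..t, Real.exp (-2 * s * a)) := by
  rw [intervalIntegral.integral_of_le ht, ofReal_integral_eq_lintegral_ofReal
    (intervalIntegrable_exp_neg_two_mul_mul a t).1 (ae_of_all _ fun _ => (Real.exp_pos _).le)]

end ExponentialDecay

section Measure

variable {α : Type*} [MeasurableSpace α] {μ : Measure α} {u : α → ℝ} {f : α → ℝ≥0∞} {t : ℝ}

lemma lintegral_lintegral_exp_mul_eq [SFinite μ] (hu : AEMeasurable u μ) (hf : AEMeasurable f μ)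
    (ht : 0 ≤ t) :
    ∫⁻ s in Set.Ioc (0 : ℝ) t, ∫⁻ x, ENNReal.ofReal (Real.exp (-2 * s * u x)) * f x ∂μ =
      ∫⁻ x, ENNReal.ofReal (∫ s in (0 : ℝ)..t, Real.exp (-2 * s * u x)) * f x ∂μ := by
  have hmeas : AEMeasurable
      (fun p : ℝ × α => ENNReal.ofReal (Real.exp (-2 * p.1 * u p.2)) * f p.2)
      ((volume.restrict (Set.Ioc 0 t)).prod μ) :=
    ((measurable_fst.const_mul (-2)).aemeasurable.mul hu.comp_snd).exp.ennreal_ofReal.mul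
      hf.comp_snd
  rw [lintegral_lintegral_swap hmeas]
  refine lintegral_congr fun x => ?_
  rw [lintegral_mul_const _ (by fun_prop), setLIntegral_exp_eq_ofReal_integral _ ht]

lemma half_mul_lintegral_div_le_lintegral_exp_mul [SFinite μ] (hu : AEMeasurable u μ)
    (hu0 : 0 ≤ᵐ[μ] u) (hf : AEMeasurable f μ) (ht : 0 < t) :
    2⁻¹ * (∫⁻ x, f x / ENNReal.ofReal (1 / t + u x) ∂μ) ≤
      ∫⁻ s in Set.Ioc (0 : ℝ) t, ∫⁻ x, ENNReal.ofReal (Real.exp (-2 * s * u x)) * f x ∂μ := by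
  rw [lintegral_lintegral_exp_mul_eq hu hf ht.le, ← lintegral_const_mul' _ _ (by simp)]
  refine lintegral_mono_ae ?_
  filter_upwards [hu0] with x hx
  have hpos : 0 < 1 / t + u x := add_pos_of_pos_of_nonneg (one_div_pos.2 ht) hx
  calc 2⁻¹ * (f x / ENNReal.ofReal (1 / t + u x))
      = ENNReal.ofReal (2⁻¹ * (1 / t + u x)⁻¹) * f x := by
        rw [ENNReal.div_eq_inv_mul, ENNReal.ofReal_mul (by norm_num),
          ENNReal.ofReal_inv_of_pos two_pos, ENNReal.ofReal_inv_of_pos hpos,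
          ENNReal.ofReal_ofNat, mul_assoc]
    _ ≤ ENNReal.ofReal (∫ s in (0 : ℝ)..t, Real.exp (-2 * s * u x)) * f x := by
        gcongr
        exact half_mul_inv_le_integral_exp ht hx

lemma lintegral_exp_mul_le_lintegral_div [SFinite μ] (hu : AEMeasurable u μ)
    (htu : ∀ᵐ x ∂μ, 0 < 1 / t + u x) (hf : AEMeasurable f μ) (ht : 0 < t) :
    ∫⁻ s in Set.Ioc (0 : ℝ) t, ∫⁻ x, ENNReal.ofReal (Real.exp (-2 * s * u x)) * f x ∂μ ≤
      ∫⁻ x, f x / ENNReal.ofReal (1 / t + u x) ∂μ := by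
  rw [lintegral_lintegral_exp_mul_eq hu hf ht.le]
  refine lintegral_mono_ae ?_
  filter_upwards [htu] with x hx
  rw [ENNReal.div_eq_inv_mul, ← ENNReal.ofReal_inv_of_pos hx]
  gcongr
  exact integral_exp_le_inv ht hx

theorem stmt_1_general [SFinite μ] (hu : AEMeasurable u μ) (hu0 : 0 ≤ᵐ[μ] u)
    (hf : AEMeasurable f μ) (ht : 0 < t) :
    2⁻¹ * (∫⁻ x, f x / ENNReal.ofReal (1 / t + u x) ∂μ) ≤
      ∫⁻ s in Set.Ioc (0 : ℝ) t, ∫⁻ x, ENNReal.ofReal (Real.exp (-2 * s * u x)) * f x ∂μ ∧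
    ∫⁻ s in Set.Ioc (0 : ℝ) t, ∫⁻ x, ENNReal.ofReal (Real.exp (-2 * s * u x)) * f x ∂μ ≤
      ∫⁻ x, f x / ENNReal.ofReal (1 / t + u x) ∂μ :=
  ⟨half_mul_lintegral_div_le_lintegral_exp_mul hu hu0 hf ht,
    lintegral_exp_mul_le_lintegral_div hu
      (hu0.mono fun _ => add_pos_of_pos_of_nonneg (one_div_pos.2 ht)) hf ht⟩

end Measure

/-- Corollary 3.2, analytic content: with `λ := t` the heat quasi-isometry gives
`(1/3) ⬝ ∫ f/((1/t) + Re Ψ) ≤ ∫_0^t ∫ e^{−2s Re Ψ} f dξ ds ≤ 4 ⬝ ∫ f/((1/t) + Re Ψ)`. -/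
theorem stmt_1 (d : ℕ) (hd : 1 ≤ d)
    (Ψ : EuclideanSpace ℝ (Fin d) → ℂ) (hΨ : Measurable Ψ)
    (hre : ∀ ξ, 0 ≤ (Ψ ξ).re)
    (f : EuclideanSpace ℝ (Fin d) → ℝ) (hf : Measurable f) (hf0 : ∀ ξ, 0 ≤ f ξ)
    (t : ℝ) (ht : 0 < t) :
    ENNReal.ofReal (1 / 3) *
        (∫⁻ ξ, ENNReal.ofReal (f ξ / (1 / t + (Ψ ξ).re)))
      ≤ ∫⁻ s in Set.Ioc (0 : ℝ) t,
          ∫⁻ ξ, ENNReal.ofReal (Real.exp (-2 * s * (Ψ ξ).re) * f ξ) ∧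
    (∫⁻ s in Set.Ioc (0 : ℝ) t,
        ∫⁻ ξ, ENNReal.ofReal (Real.exp (-2 * s * (Ψ ξ).re) * f ξ))
      ≤ 4 * (∫⁻ ξ, ENNReal.ofReal (f ξ / (1 / t + (Ψ ξ).re))) := by
  have hpos (ξ) : 0 < 1 / t + (Ψ ξ).re := add_pos_of_pos_of_nonneg (one_div_pos.2 ht) (hre ξ)
  simp_rw [ENNReal.ofReal_div_of_pos (hpos _), ENNReal.ofReal_mul (Real.exp_pos _).le]
  have hthird : ENNReal.ofReal (1 / 3) ≤ 2⁻¹ := ENNReal.ofReal_le_of_le_toReal (by norm_num)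
  obtain ⟨hlower, hupper⟩ := stmt_1_general (μ := volume) hΨ.re.aemeasurable
    (ae_of_all _ hre) hf.ennreal_ofReal.aemeasurable ht
  exact ⟨(mul_le_mul_left hthird _).trans hlower,
    hupper.trans (le_mul_of_one_le_left' (by norm_num))⟩
end

section
/- Let d ≥ 1, let Ψ : ℝ^d → (0,∞) be measurable, and let f : ℝ^d → [0,∞) be measurable. Then for every t ≥ 0, (t/4) · ∫_{ℝ^d} f(ξ)/((1/t²) + Ψ(ξ)) dξ ≤ ∫_0^t ∫_{ℝ^d} (sin(√(Ψ(ξ)) · s))² / Ψ(ξ) · f(ξ) dξ ds ≤ 2t · ∫_{ℝ^d} f(ξ)/((1/t²) + Ψ(ξ)) dξ. -/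
open MeasureTheory

/-!
Tonelli reduces both bounds to inequalities for a fixed `ψ = Ψ ξ > 0`. The upper one holds at each
time `s ≤ t`: with `y = √ψ * s` it is `sin² y ≤ min 1 (y²) ≤ 2 * y² / (1 + y²)`. For the lower one
put `x = √ψ * t`. The time integral of `sin² (√ψ * s) / ψ` is `(x - sin x * cos x) / (2 * √ψ ^ 3)`,
so it suffices that `sin x * cos x ≤ x / 2 * (1 + 1 / (1 + x²))`. For `x ≤ 1` this combines
`sin x ≤ x` and `cos x ≤ 1 / √(1 + x²)` with AM-GM, and for `x ≥ 1` even `sin x * cos x ≤ 1 / 2`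
is enough.
-/

theorem sin_sq_le_two_mul_sq_div_one_add_sq (x : ℝ) :
    Real.sin x ^ 2 ≤ 2 * x ^ 2 / (1 + x ^ 2) := by
  rw [le_div_iff₀ (by positivity)]
  calc Real.sin x ^ 2 * (1 + x ^ 2) = Real.sin x ^ 2 + Real.sin x ^ 2 * x ^ 2 := by ring
    _ ≤ x ^ 2 + 1 * x ^ 2 := add_le_add Real.sin_sq_le_sq (by gcongr; exact Real.sin_sq_le_one x)
    _ = 2 * x ^ 2 := by ring

theorem one_div_sqrt_le_half_mul_one_add_one_div {u : ℝ} (hu : 0 ≤ u) :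
    1 / √u ≤ 1 / 2 * (1 + 1 / u) := by
  have amgm := two_mul_le_add_sq 1 (1 / √u)
  rw [div_pow, Real.sq_sqrt hu] at amgm
  linarith

theorem sin_mul_cos_le_half (x : ℝ) : Real.sin x * Real.cos x ≤ 1 / 2 := by
  linarith [Real.sin_two_mul x, Real.sin_le_one (2 * x)]

theorem sin_mul_cos_le {x : ℝ} (hx : 0 ≤ x) :
    Real.sin x * Real.cos x ≤ x / 2 * (1 + 1 / (1 + x ^ 2)) := by
  rcases le_total x 1 with hx1 | hx1
  · have hπ := Real.pi_gt_three
    have cos_nonneg : 0 ≤ Real.cos x := Real.cos_nonneg_of_mem_Icc ⟨by linarith, by linarith⟩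
    calc Real.sin x * Real.cos x ≤ x * Real.cos x := by gcongr; exact Real.sin_le hx
      _ ≤ x * (1 / √(x ^ 2 + 1)) := by
        gcongr
        exact Real.cos_le_one_div_sqrt_sq_add_one (by linarith) (by linarith)
      _ ≤ x * (1 / 2 * (1 + 1 / (x ^ 2 + 1))) := by
        gcongr
        exact one_div_sqrt_le_half_mul_one_add_one_div (by positivity)
      _ = x / 2 * (1 + 1 / (1 + x ^ 2)) := by ring
  · calc Real.sin x * Real.cos x ≤ 1 / 2 := sin_mul_cos_le_half x
      _ ≤ x / 2 * 1 := by linarith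
      _ ≤ x / 2 * (1 + 1 / (1 + x ^ 2)) := by
        gcongr
        exact le_add_of_nonneg_right (by positivity)

theorem integral_sin_mul_sq {a : ℝ} (ha : a ≠ 0) (t : ℝ) :
    ∫ s in (0 : ℝ)..t, Real.sin (a * s) ^ 2 =
      (a * t - Real.sin (a * t) * Real.cos (a * t)) / (2 * a) := by
  rw [intervalIntegral.integral_comp_mul_left (fun u => Real.sin u ^ 2) ha, integral_sin_sq,
    mul_zero, Real.sin_zero, smul_eq_mul]
  field_simp
  ring

theorem sin_sqrt_mul_sq_div_le {ψ s t : ℝ} (hψ : 0 < ψ) (hs : 0 < s) (hst : s ≤ t) :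
    Real.sin (√ψ * s) ^ 2 / ψ ≤ 2 / (1 / t ^ 2 + ψ) :=
  calc Real.sin (√ψ * s) ^ 2 / ψ
      ≤ 2 * (√ψ * s) ^ 2 / (1 + (√ψ * s) ^ 2) / ψ := by
        gcongr
        exact sin_sq_le_two_mul_sq_div_one_add_sq _
    _ = 2 / (1 / s ^ 2 + ψ) := by
        rw [mul_pow, Real.sq_sqrt hψ.le]
        field_simp
    _ ≤ 2 / (1 / t ^ 2 + ψ) := by
        have ht : 0 < t := hs.trans_le hst
        gcongr

theorem div_le_integral_sin_sqrt_mul_sq_div {ψ t : ℝ} (hψ : 0 < ψ) (ht : 0 < t) :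
    t / 4 / (1 / t ^ 2 + ψ) ≤ ∫ s in (0 : ℝ)..t, Real.sin (√ψ * s) ^ 2 / ψ := by
  have sqrt_pos : 0 < √ψ := Real.sqrt_pos.mpr hψ
  set x := √ψ * t with hx
  calc t / 4 / (1 / t ^ 2 + ψ)
      = (x - x / 2 * (1 + 1 / (1 + x ^ 2))) / (2 * √ψ) / ψ := by
        rw [hx, mul_pow, Real.sq_sqrt hψ.le]
        field_simp
        ring
    _ ≤ (x - Real.sin x * Real.cos x) / (2 * √ψ) / ψ := by
        gcongr (x - ?_) / _ / _
        exact sin_mul_cos_le (by positivity)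
    _ = ∫ s in (0 : ℝ)..t, Real.sin (√ψ * s) ^ 2 / ψ := by
        rw [intervalIntegral.integral_div, integral_sin_mul_sq sqrt_pos.ne']

theorem setLIntegral_Ioc_ofReal_eq_ofReal_integral {g : ℝ → ℝ} {a b : ℝ} (hab : a ≤ b)
    (hg : IntervalIntegrable g volume a b) (hg0 : ∀ s ∈ Set.Ioc a b, 0 ≤ g s) :
    ∫⁻ s in Set.Ioc a b, ENNReal.ofReal (g s) = ENNReal.ofReal (∫ s in a..b, g s) := by
  rw [intervalIntegral.integral_of_le hab,
    ofReal_integral_eq_lintegral_ofReal hg.1 (ae_restrict_of_forall_mem measurableSet_Ioc hg0)]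

section SpectralBounds

variable {α : Type*} [MeasurableSpace α] {μ : Measure α} {Ψ f : α → ℝ} {t : ℝ}

theorem mul_lintegral_resolvent_le_lintegral_lintegral_sin_sq [SFinite μ]
    (hΨ : AEMeasurable Ψ μ) (hpos : ∀ᵐ ξ ∂μ, 0 < Ψ ξ)
    (hf : AEMeasurable f μ) (hf0 : ∀ᵐ ξ ∂μ, 0 ≤ f ξ) (ht : 0 < t) :
    ENNReal.ofReal (t / 4) * ∫⁻ ξ, ENNReal.ofReal (f ξ / (1 / t ^ 2 + Ψ ξ)) ∂μ ≤
      ∫⁻ s in Set.Ioc 0 t, ∫⁻ ξ, ENNReal.ofReal (Real.sin (√(Ψ ξ) * s) ^ 2 / Ψ ξ * f ξ) ∂μ := by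
  have integrand_aemeasurable :
      AEMeasurable (Function.uncurry fun s ξ =>
        ENNReal.ofReal (Real.sin (√(Ψ ξ) * s) ^ 2 / Ψ ξ * f ξ))
        ((volume.restrict (Set.Ioc 0 t)).prod μ) := by
    simp only [Function.uncurry_def]
    fun_prop
  rw [lintegral_lintegral_swap integrand_aemeasurable,
    ← lintegral_const_mul' _ _ ENNReal.ofReal_ne_top]
  refine lintegral_mono_ae ?_
  filter_upwards [hpos, hf0] with ξ hψ hfξ
  have integrand_continuous :
      Continuous fun s : ℝ => Real.sin (√(Ψ ξ) * s) ^ 2 / Ψ ξ * f ξ := by fun_prop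
  rw [setLIntegral_Ioc_ofReal_eq_ofReal_integral ht.le
      (integrand_continuous.intervalIntegrable 0 t) (fun s _ => by positivity),
    ← ENNReal.ofReal_mul (by positivity), intervalIntegral.integral_mul_const]
  refine ENNReal.ofReal_le_ofReal ?_
  calc t / 4 * (f ξ / (1 / t ^ 2 + Ψ ξ)) = t / 4 / (1 / t ^ 2 + Ψ ξ) * f ξ := by ring
    _ ≤ (∫ s in (0 : ℝ)..t, Real.sin (√(Ψ ξ) * s) ^ 2 / Ψ ξ) * f ξ := by
        gcongr
        exact div_le_integral_sin_sqrt_mul_sq_div hψ ht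

theorem lintegral_sin_sq_le_two_mul_lintegral_resolvent {s : ℝ}
    (hpos : ∀ᵐ ξ ∂μ, 0 < Ψ ξ) (hf0 : ∀ᵐ ξ ∂μ, 0 ≤ f ξ) (hs : 0 < s) (hst : s ≤ t) :
    ∫⁻ ξ, ENNReal.ofReal (Real.sin (√(Ψ ξ) * s) ^ 2 / Ψ ξ * f ξ) ∂μ ≤
      ENNReal.ofReal 2 * ∫⁻ ξ, ENNReal.ofReal (f ξ / (1 / t ^ 2 + Ψ ξ)) ∂μ := by
  rw [← lintegral_const_mul' _ _ ENNReal.ofReal_ne_top]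
  refine lintegral_mono_ae ?_
  filter_upwards [hpos, hf0] with ξ hψ hfξ
  rw [← ENNReal.ofReal_mul zero_le_two]
  refine ENNReal.ofReal_le_ofReal ?_
  calc Real.sin (√(Ψ ξ) * s) ^ 2 / Ψ ξ * f ξ ≤ 2 / (1 / t ^ 2 + Ψ ξ) * f ξ := by
        gcongr ?_ * _
        exact sin_sqrt_mul_sq_div_le hψ hs hst
    _ = 2 * (f ξ / (1 / t ^ 2 + Ψ ξ)) := by ring

theorem lintegral_lintegral_sin_sq_le_mul_lintegral_resolvent
    (hpos : ∀ᵐ ξ ∂μ, 0 < Ψ ξ) (hf0 : ∀ᵐ ξ ∂μ, 0 ≤ f ξ) :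
    ∫⁻ s in Set.Ioc 0 t, ∫⁻ ξ, ENNReal.ofReal (Real.sin (√(Ψ ξ) * s) ^ 2 / Ψ ξ * f ξ) ∂μ ≤
      ENNReal.ofReal (2 * t) * ∫⁻ ξ, ENNReal.ofReal (f ξ / (1 / t ^ 2 + Ψ ξ)) ∂μ :=
  calc ∫⁻ s in Set.Ioc 0 t, ∫⁻ ξ, ENNReal.ofReal (Real.sin (√(Ψ ξ) * s) ^ 2 / Ψ ξ * f ξ) ∂μ
      ≤ ∫⁻ _ in Set.Ioc 0 t,
          ENNReal.ofReal 2 * ∫⁻ ξ, ENNReal.ofReal (f ξ / (1 / t ^ 2 + Ψ ξ)) ∂μ :=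
        setLIntegral_mono measurable_const fun _ hs =>
          lintegral_sin_sq_le_two_mul_lintegral_resolvent hpos hf0 hs.1 hs.2
    _ = ENNReal.ofReal (2 * t) * ∫⁻ ξ, ENNReal.ofReal (f ξ / (1 / t ^ 2 + Ψ ξ)) ∂μ := by
        rw [setLIntegral_const, Real.volume_Ioc, sub_zero, ENNReal.ofReal_mul zero_le_two]
        ring

-- A Lévy exponent vanishes at the origin, so positivity is only asked almost everywhere.
theorem stmt_2_general [SFinite μ]
    (hΨ : AEMeasurable Ψ μ) (hpos : ∀ᵐ ξ ∂μ, 0 < Ψ ξ)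
    (hf : AEMeasurable f μ) (hf0 : ∀ᵐ ξ ∂μ, 0 ≤ f ξ) (ht : 0 ≤ t) :
    ENNReal.ofReal (t / 4) * (∫⁻ ξ, ENNReal.ofReal (f ξ / (1 / t ^ 2 + Ψ ξ)) ∂μ) ≤
      ∫⁻ s in Set.Ioc 0 t, ∫⁻ ξ, ENNReal.ofReal (Real.sin (√(Ψ ξ) * s) ^ 2 / Ψ ξ * f ξ) ∂μ ∧
    (∫⁻ s in Set.Ioc 0 t, ∫⁻ ξ, ENNReal.ofReal (Real.sin (√(Ψ ξ) * s) ^ 2 / Ψ ξ * f ξ) ∂μ) ≤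
      ENNReal.ofReal (2 * t) * ∫⁻ ξ, ENNReal.ofReal (f ξ / (1 / t ^ 2 + Ψ ξ)) ∂μ := by
  refine ⟨?_, lintegral_lintegral_sin_sq_le_mul_lintegral_resolvent hpos hf0⟩
  rcases ht.eq_or_lt with rfl | ht_pos
  · simp
  · exact mul_lintegral_resolvent_le_lintegral_lintegral_sin_sq hΨ hpos hf hf0 ht_pos

end SpectralBounds

/-- Proposition 3.6 (wave quasi-isometry), analytic content: for measurable
`Ψ : ℝ^d → (0,∞)` and measurable `f ≥ 0`, for every `t ≥ 0`,
`(t/4) ⬝ ∫ f/((1/t²) + Ψ) ≤ ∫_0^t ∫ sin²(√Ψ s)/Ψ ⬝ f dξ ds ≤ 2t ⬝ ∫ f/((1/t²) + Ψ)`. -/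
theorem stmt_2 (d : ℕ) (hd : 1 ≤ d)
    (Ψ : EuclideanSpace ℝ (Fin d) → ℝ) (hΨ : Measurable Ψ)
    (hpos : ∀ ξ, 0 < Ψ ξ)
    (f : EuclideanSpace ℝ (Fin d) → ℝ) (hf : Measurable f) (hf0 : ∀ ξ, 0 ≤ f ξ)
    (t : ℝ) (ht : 0 ≤ t) :
    ENNReal.ofReal (t / 4) *
        (∫⁻ ξ, ENNReal.ofReal (f ξ / (1 / t ^ 2 + Ψ ξ)))
      ≤ ∫⁻ s in Set.Ioc (0 : ℝ) t,
          ∫⁻ ξ, ENNReal.ofReal ((Real.sin (Real.sqrt (Ψ ξ) * s)) ^ 2 / Ψ ξ * f ξ) ∧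
    (∫⁻ s in Set.Ioc (0 : ℝ) t,
        ∫⁻ ξ, ENNReal.ofReal ((Real.sin (Real.sqrt (Ψ ξ) * s)) ^ 2 / Ψ ξ * f ξ))
      ≤ ENNReal.ofReal (2 * t) *
          (∫⁻ ξ, ENNReal.ofReal (f ξ / (1 / t ^ 2 + Ψ ξ))) :=
  stmt_2_general hΨ.aemeasurable (.of_forall hpos) hf.aemeasurable (.of_forall hf0) ht
end

section
/- Let g : [0,∞) → [0,∞) be Borel measurable and nonincreasing. Then for all t > 0 and λ > 0, (1 − e^{−2t/λ}) · ∫_0^∞ e^{−2s/λ} g(s) ds ≤ ∫_0^t g(s) ds ≤ e^{2t/λ} · ∫_0^∞ e^{−2s/λ} g(s) ds. Moreover, the upper bound ∫_0^t g(s) ds ≤ e^{2t/λ} ∫_0^∞ e^{−2s/λ} g(s) ds holds for every Borel measurable g : [0,∞) → [0,∞), without assuming monotonicity. -/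
open MeasureTheory

/-!
Write `h s = e^{-cs} g s` with `c = 2/λ` and `q = e^{-ct}`. Since `g` is nonincreasing,
`h (s + t) ≤ q * h s`, so the integral of `h` over the `n`-th block `(nt, (n+1)t]` is at most
`q ^ n` times the integral over `(0, t]`; summing the geometric series gives
`(1 - q) ∫_0^∞ h ≤ ∫_0^t h ≤ ∫_0^t g`. The upper bound is the pointwise inequality
`1 ≤ e^{ct} e^{-cs}` on `(0, t]`.
-/

open Filter Set
open scoped ENNReal

lemma le_pow_mul_of_forall_add_le_mul {M R : Type*} [AddMonoid M] [Preorder M] [AddLeftMono M]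
    [Monoid R] [Preorder R] [MulLeftMono R] {h : M → R} {q : R} {a t : M} (ht : 0 ≤ t)
    (hh : ∀ s, a < s → h (s + t) ≤ q * h s) (n : ℕ) {s : M} (hs : a < s) :
    h (s + n • t) ≤ q ^ n * h s := by
  induction n with
  | zero => simp
  | succ n ih =>
    calc h (s + (n + 1) • t) = h (s + n • t + t) := by rw [succ_nsmul, add_assoc]
      _ ≤ q * h (s + n • t) := hh _ (lt_add_of_lt_of_nonneg hs (nsmul_nonneg ht n))
      _ ≤ q * (q ^ n * h s) := by gcongr
      _ = q ^ (n + 1) * h s := by rw [pow_succ', mul_assoc]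

section Blocks

variable {α : Type*} [LinearOrder α] [NoMaxOrder α] [TopologicalSpace α] [OrderClosedTopology α]
  [MeasurableSpace α] [OpensMeasurableSpace α]

lemma lintegral_Ioi_eq_tsum_lintegral_Ioc (μ : Measure α) (f : α → ℝ≥0∞) {u : ℕ → α}
    (hu : Monotone u) (hu_top : Tendsto u atTop atTop) :
    ∫⁻ s in Ioi (u 0), f s ∂μ = ∑' n, ∫⁻ s in Ioc (u n) (u (n + 1)), f s ∂μ := by
  have hcover : ⋃ n, Ioc (u n) (u (n + 1)) = Ioi (u 0) :=
    iUnion_Ioc_map_succ_eq_Ioi (fun n => hu n.zero_le) (not_bddAbove_of_tendsto_atTop hu_top)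
  rw [← hcover]
  exact lintegral_iUnion (fun _ => measurableSet_Ioc) hu.pairwise_disjoint_on_Ioc_succ f

end Blocks

section Translation

variable (μ : Measure ℝ) [μ.IsAddRightInvariant] {a t : ℝ}

lemma setLIntegral_Ioc_add_right (f : ℝ → ℝ≥0∞) (a b d : ℝ) :
    ∫⁻ s in Ioc (a + d) (b + d), f s ∂μ = ∫⁻ s in Ioc a b, f (s + d) ∂μ := by
  rw [← (measurePreserving_add_right μ d).setLIntegral_comp_preimage_emb
    (measurableEmbedding_addRight d)]
  simp only [preimage_add_const_Ioc, add_sub_cancel_right]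

lemma lintegral_Ioi_eq_tsum_lintegral_Ioc_add_nsmul (f : ℝ → ℝ≥0∞) (ht : 0 < t) :
    ∫⁻ s in Ioi a, f s ∂μ = ∑' n : ℕ, ∫⁻ s in Ioc a (a + t), f (s + n • t) ∂μ := by
  have hmono : Monotone fun n : ℕ => a + n • t := fun _ _ hmn =>
    add_le_add_right (nsmul_le_nsmul_left ht.le hmn) a
  have htop : Tendsto (fun n : ℕ => a + n • t) atTop atTop :=
    tendsto_atTop_add_const_left _ a (tendsto_id.atTop_nsmul_const ht)
  have hblocks := lintegral_Ioi_eq_tsum_lintegral_Ioc μ f hmono htop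
  simp only [zero_nsmul, add_zero] at hblocks
  refine hblocks.trans (tsum_congr fun n => ?_)
  rw [← setLIntegral_Ioc_add_right, succ_nsmul', add_assoc]

theorem one_sub_mul_lintegral_Ioi_le_lintegral_Ioc {h : ℝ → ℝ≥0∞} {q : ℝ≥0∞} (ht : 0 < t)
    (hh : ∀ s, a < s → h (s + t) ≤ q * h s) :
    (1 - q) * ∫⁻ s in Ioi a, h s ∂μ ≤ ∫⁻ s in Ioc a (a + t), h s ∂μ := by
  obtain hq | hq := le_or_gt 1 q
  · simp [tsub_eq_zero_of_le hq]
  have hblock (n : ℕ) : ∫⁻ s in Ioc a (a + t), h (s + n • t) ∂μ ≤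
      q ^ n * ∫⁻ s in Ioc a (a + t), h s ∂μ := by
    rw [← lintegral_const_mul' _ _ (ENNReal.pow_ne_top hq.ne_top)]
    exact setLIntegral_mono' measurableSet_Ioc fun s hs =>
      le_pow_mul_of_forall_add_le_mul ht.le hh n hs.1
  calc (1 - q) * ∫⁻ s in Ioi a, h s ∂μ
      = (1 - q) * ∑' n : ℕ, ∫⁻ s in Ioc a (a + t), h (s + n • t) ∂μ := by
        rw [lintegral_Ioi_eq_tsum_lintegral_Ioc_add_nsmul μ h ht]
    _ ≤ (1 - q) * ∑' n : ℕ, q ^ n * ∫⁻ s in Ioc a (a + t), h s ∂μ := by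
        gcongr with n
        exact hblock n
    _ = (1 - q) * (1 - q)⁻¹ * ∫⁻ s in Ioc a (a + t), h s ∂μ := by
        rw [ENNReal.tsum_mul_right, ENNReal.tsum_geometric, mul_assoc]
    _ ≤ ∫⁻ s in Ioc a (a + t), h s ∂μ :=
        mul_le_of_le_one_left' (ENNReal.mul_inv_le_one _)

end Translation

section ExponentialWeight

variable (μ : Measure ℝ) {c t : ℝ}

theorem one_sub_exp_mul_lintegral_Ioi_exp_mul_le_lintegral_Ioc [μ.IsAddRightInvariant]
    {f : ℝ → ℝ≥0∞} (ht : 0 < t) (hc : 0 ≤ c) (hf : AntitoneOn f (Ioi 0)) :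
    ENNReal.ofReal (1 - Real.exp (-c * t)) *
        ∫⁻ s in Ioi 0, ENNReal.ofReal (Real.exp (-c * s)) * f s ∂μ ≤
      ∫⁻ s in Ioc 0 t, f s ∂μ := by
  have hdecay (s : ℝ) (hs : 0 < s) : ENNReal.ofReal (Real.exp (-c * (s + t))) * f (s + t) ≤
      ENNReal.ofReal (Real.exp (-c * t)) * (ENNReal.ofReal (Real.exp (-c * s)) * f s) := by
    rw [add_comm s t, mul_add, Real.exp_add, ENNReal.ofReal_mul (Real.exp_nonneg _), mul_assoc]
    gcongr
    exact hf hs (add_pos ht hs) (le_add_of_nonneg_left ht.le)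
  have hweight (s : ℝ) (hs : 0 < s) : ENNReal.ofReal (Real.exp (-c * s)) ≤ 1 := by
    rw [ENNReal.ofReal_le_one, Real.exp_le_one_iff, neg_mul, neg_nonpos]
    exact mul_nonneg hc hs.le
  rw [ENNReal.ofReal_sub _ (Real.exp_nonneg _), ENNReal.ofReal_one]
  calc _ ≤ ∫⁻ s in Ioc 0 t, ENNReal.ofReal (Real.exp (-c * s)) * f s ∂μ := by
        simpa only [zero_add] using one_sub_mul_lintegral_Ioi_le_lintegral_Ioc μ ht hdecay
    _ ≤ ∫⁻ s in Ioc 0 t, f s ∂μ :=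
        setLIntegral_mono' measurableSet_Ioc fun s hs => mul_le_of_le_one_left' (hweight s hs.1)

theorem lintegral_Ioc_le_exp_mul_lintegral_Ioi_exp_mul (f : ℝ → ℝ≥0∞) (hc : 0 ≤ c) :
    ∫⁻ s in Ioc 0 t, f s ∂μ ≤
      ENNReal.ofReal (Real.exp (c * t)) *
        ∫⁻ s in Ioi 0, ENNReal.ofReal (Real.exp (-c * s)) * f s ∂μ := by
  have hweight (s : ℝ) (hs : s ≤ t) :
      1 ≤ ENNReal.ofReal (Real.exp (c * t)) * ENNReal.ofReal (Real.exp (-c * s)) := by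
    rw [← ENNReal.ofReal_mul (Real.exp_nonneg _), ← Real.exp_add, ENNReal.one_le_ofReal,
      Real.one_le_exp_iff, neg_mul, ← sub_eq_add_neg, sub_nonneg]
    gcongr
  rw [← lintegral_const_mul' _ _ ENNReal.ofReal_ne_top]
  calc ∫⁻ s in Ioc 0 t, f s ∂μ
      ≤ ∫⁻ s in Ioc 0 t, ENNReal.ofReal (Real.exp (c * t)) *
          (ENNReal.ofReal (Real.exp (-c * s)) * f s) ∂μ := by
        refine setLIntegral_mono' measurableSet_Ioc fun s hs => ?_
        rw [← mul_assoc]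
        exact le_mul_of_one_le_left' (hweight s hs.2)
    _ ≤ _ := lintegral_mono_set Ioc_subset_Ioi_self

theorem stmt_3_general [μ.IsAddRightInvariant] (ht : 0 < t) (hc : 0 ≤ c) :
    (∀ f : ℝ → ℝ≥0∞, AntitoneOn f (Ioi 0) →
      ENNReal.ofReal (1 - Real.exp (-c * t)) *
          ∫⁻ s in Ioi 0, ENNReal.ofReal (Real.exp (-c * s)) * f s ∂μ ≤
        ∫⁻ s in Ioc 0 t, f s ∂μ) ∧
    (∀ f : ℝ → ℝ≥0∞,
      ∫⁻ s in Ioc 0 t, f s ∂μ ≤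
        ENNReal.ofReal (Real.exp (c * t)) *
          ∫⁻ s in Ioi 0, ENNReal.ofReal (Real.exp (-c * s)) * f s ∂μ) :=
  ⟨fun _ hf => one_sub_exp_mul_lintegral_Ioi_exp_mul_le_lintegral_Ioc μ ht hc hf,
    fun f => lintegral_Ioc_le_exp_mul_lintegral_Ioi_exp_mul μ f hc⟩

end ExponentialWeight

/-- Lemma 3.3: for nonincreasing measurable `g : [0,∞) → [0,∞)` and `t, λ > 0`,
`(1 − e^{−2t/λ}) ∫_0^∞ e^{−2s/λ} g(s) ds ≤ ∫_0^t g(s) ds ≤ e^{2t/λ} ∫_0^∞ e^{−2s/λ} g(s) ds`,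
and the upper bound holds for every measurable nonnegative `g` without monotonicity. -/
theorem stmt_3 (t lam : ℝ) (ht : 0 < t) (hlam : 0 < lam) :
    (∀ g : ℝ → ℝ, Measurable g → (∀ s ∈ Set.Ici (0 : ℝ), 0 ≤ g s) →
      AntitoneOn g (Set.Ici 0) →
      ENNReal.ofReal (1 - Real.exp (-2 * t / lam)) *
          (∫⁻ s in Set.Ioi (0 : ℝ), ENNReal.ofReal (Real.exp (-2 * s / lam) * g s))
        ≤ ∫⁻ s in Set.Ioc (0 : ℝ) t, ENNReal.ofReal (g s)) ∧
    (∀ g : ℝ → ℝ, Measurable g → (∀ s ∈ Set.Ici (0 : ℝ), 0 ≤ g s) →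
      (∫⁻ s in Set.Ioc (0 : ℝ) t, ENNReal.ofReal (g s))
        ≤ ENNReal.ofReal (Real.exp (2 * t / lam)) *
            (∫⁻ s in Set.Ioi (0 : ℝ), ENNReal.ofReal (Real.exp (-2 * s / lam) * g s))) := by
  obtain ⟨lower, upper⟩ := stmt_3_general volume ht (div_nonneg zero_le_two hlam.le : 0 ≤ 2 / lam)
  simp only [mul_div_right_comm, neg_div, ENNReal.ofReal_mul (Real.exp_nonneg _)]
  exact ⟨fun g _ _ hg =>
      lower _ (ENNReal.ofReal_mono.comp_antitoneOn (hg.mono Ioi_subset_Ici_self)),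
    fun g _ _ => upper _⟩
end

section
/- Let d ≥ 1, let Ψ : ℝ^d → (0,∞) be measurable, and let f : ℝ^d → [0,∞) be measurable. Then for every t ≥ 0 and ε > 0, ∫_0^t ∫_{ℝ^d} |sin(√(Ψ(ξ))·(r+ε)) − sin(√(Ψ(ξ))·r)|² / Ψ(ξ) · f(ξ) dξ dr + ∫_0^ε ∫_{ℝ^d} sin²(√(Ψ(ξ))·r)/Ψ(ξ) · f(ξ) dξ dr ≤ (8t + 6ε) · ∫_{ℝ^d} f(ξ)/((1/ε²) + Ψ(ξ)) dξ. -/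
open MeasureTheory

/-!
Let `D` be the square of an increment of `r ↦ sin (√p * r)` over a time step of length at most `ε`.
Then `D ≤ 4` because `|sin| ≤ 1`, and `D ≤ ε ^ 2 * p` because `sin` is `1`-Lipschitz; adding
`D * p ≤ 4 * p` and `D * (1 / ε ^ 2) ≤ p` gives `D / p ≤ 5 / (1 / ε ^ 2 + p)`. This pointwise bound
is uniform in time, so both integrals follow from it: `sin (√p * r)` is the increment from time `0`
to time `r ≤ ε`, and `5 * t + 5 * ε ≤ 8 * t + 6 * ε`.
-/

theorem div_le_one_add_div_add {K : Type*} [Field K] [LinearOrder K] [IsStrictOrderedRing K]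
    {D C a p : K} (hp : 0 < p) (ha : 0 ≤ a) (hDC : D ≤ C) (haD : a * D ≤ p) :
    D / p ≤ (1 + C) / (a + p) := by
  rw [div_le_div_iff₀ hp (by positivity)]
  calc D * (a + p) = a * D + D * p := by ring
    _ ≤ p + C * p := by gcongr
    _ = (1 + C) * p := by ring

theorem sq_abs_sin_sub_sin_le_four (x y : ℝ) : |Real.sin x - Real.sin y| ^ 2 ≤ 4 := by
  have abs_le_two : |Real.sin x - Real.sin y| ≤ 2 :=
    calc |Real.sin x - Real.sin y| ≤ |Real.sin x| + |Real.sin y| := abs_sub _ _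
      _ ≤ 1 + 1 := add_le_add (Real.abs_sin_le_one x) (Real.abs_sin_le_one y)
      _ = 2 := one_add_one_eq_two
  calc |Real.sin x - Real.sin y| ^ 2 ≤ 2 ^ 2 := by gcongr
    _ = 4 := by norm_num

theorem sq_abs_sin_sqrt_mul_sub_le {p s r ε : ℝ} (hp : 0 ≤ p) (hsr : |s - r| ≤ ε) :
    |Real.sin (√p * s) - Real.sin (√p * r)| ^ 2 ≤ ε ^ 2 * p :=
  calc |Real.sin (√p * s) - Real.sin (√p * r)| ^ 2
      ≤ |√p * s - √p * r| ^ 2 :=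
        pow_le_pow_left₀ (abs_nonneg _) (Real.abs_sin_sub_sin_le _ _) 2
    _ = |s - r| ^ 2 * p := by
        rw [← mul_sub, abs_mul, mul_pow, sq_abs √p, Real.sq_sqrt hp, mul_comm]
    _ ≤ ε ^ 2 * p := by gcongr

theorem sq_abs_sin_sqrt_mul_sub_div_le {p s r ε : ℝ} (hp : 0 < p) (hε : 0 < ε)
    (hsr : |s - r| ≤ ε) :
    |Real.sin (√p * s) - Real.sin (√p * r)| ^ 2 / p ≤ 5 / (1 / ε ^ 2 + p) := by
  have inv_sq_mul_le :
      1 / ε ^ 2 * |Real.sin (√p * s) - Real.sin (√p * r)| ^ 2 ≤ p := by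
    rw [one_div, inv_mul_le_iff₀ (by positivity)]
    exact sq_abs_sin_sqrt_mul_sub_le hp.le hsr
  calc |Real.sin (√p * s) - Real.sin (√p * r)| ^ 2 / p
      ≤ (1 + 4) / (1 / ε ^ 2 + p) :=
        div_le_one_add_div_add hp (by positivity) (sq_abs_sin_sub_sin_le_four _ _) inv_sq_mul_le
    _ = 5 / (1 / ε ^ 2 + p) := by norm_num

section Integral

variable {α β : Type*} [MeasurableSpace α] [MeasurableSpace β] {μ : Measure α} {ν : Measure β}
  {s : Set β}

open scoped ENNReal in
theorem setLIntegral_lintegral_le_of_le_const_mul {F : β → α → ℝ≥0∞} {g : α → ℝ≥0∞} {c : ℝ≥0∞}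
    (hs : MeasurableSet s) (hc : c ≠ ∞) (hF : ∀ r ∈ s, ∀ x, F r x ≤ c * g x) :
    ∫⁻ r in s, ∫⁻ x, F r x ∂μ ∂ν ≤ c * ν s * ∫⁻ x, g x ∂μ :=
  calc ∫⁻ r in s, ∫⁻ x, F r x ∂μ ∂ν
      ≤ ∫⁻ _ in s, c * ∫⁻ x, g x ∂μ ∂ν := by
        refine setLIntegral_mono' hs fun r hr ↦ ?_
        rw [← lintegral_const_mul' c g hc]
        exact lintegral_mono (hF r hr)
    _ = c * ν s * ∫⁻ x, g x ∂μ := by rw [setLIntegral_const, mul_right_comm]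

variable {Ψ f : α → ℝ} {ε : ℝ}

theorem setLIntegral_lintegral_sq_abs_sin_sub_le (hΨ : ∀ x, 0 < Ψ x) (hf : ∀ x, 0 ≤ f x)
    (hε : 0 < ε) (hs : MeasurableSet s) {u v : β → ℝ} (huv : ∀ r ∈ s, |u r - v r| ≤ ε) :
    ∫⁻ r in s, ∫⁻ x, ENNReal.ofReal
        (|Real.sin (√(Ψ x) * u r) - Real.sin (√(Ψ x) * v r)| ^ 2 / Ψ x * f x) ∂μ ∂ν
      ≤ ENNReal.ofReal 5 * ν s * ∫⁻ x, ENNReal.ofReal (f x / (1 / ε ^ 2 + Ψ x)) ∂μ := by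
  refine setLIntegral_lintegral_le_of_le_const_mul hs ENNReal.ofReal_ne_top fun r hr x ↦ ?_
  rw [← ENNReal.ofReal_mul (by norm_num), ← mul_comm_div]
  exact ENNReal.ofReal_le_ofReal <|
    mul_le_mul_of_nonneg_right (sq_abs_sin_sqrt_mul_sub_div_le (hΨ x) hε (huv r hr)) (hf x)

theorem stmt_7_general (hΨ : ∀ x, 0 < Ψ x) (hf : ∀ x, 0 ≤ f x) {t : ℝ} (ht : 0 ≤ t)
    (hε : 0 < ε) :
    (∫⁻ r in Set.Ioc 0 t, ∫⁻ x, ENNReal.ofReal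
        (|Real.sin (√(Ψ x) * (r + ε)) - Real.sin (√(Ψ x) * r)| ^ 2 / Ψ x * f x) ∂μ) +
      (∫⁻ r in Set.Ioc 0 ε, ∫⁻ x, ENNReal.ofReal
        (Real.sin (√(Ψ x) * r) ^ 2 / Ψ x * f x) ∂μ)
      ≤ ENNReal.ofReal (5 * (t + ε)) *
          ∫⁻ x, ENNReal.ofReal (f x / (1 / ε ^ 2 + Ψ x)) ∂μ := by
  rw [ENNReal.ofReal_mul (by norm_num), ENNReal.ofReal_add ht hε.le, mul_add, add_mul]
  refine add_le_add ?increment ?initial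
  case increment =>
    have step_le : ∀ r ∈ Set.Ioc 0 t, |(r + ε) - r| ≤ ε := fun r _ ↦ by
      rw [add_sub_cancel_left, abs_of_pos hε]
    simpa only [Real.volume_Ioc, sub_zero] using
      setLIntegral_lintegral_sq_abs_sin_sub_le (ν := volume) hΨ hf hε measurableSet_Ioc step_le
  case initial =>
    have step_le : ∀ r ∈ Set.Ioc 0 ε, |r - 0| ≤ ε := fun r hr ↦ by
      rw [sub_zero, abs_of_pos hr.1]
      exact hr.2
    simpa only [Real.volume_Ioc, sub_zero, mul_zero, Real.sin_zero, sq_abs] using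
      setLIntegral_lintegral_sq_abs_sin_sub_le (ν := volume) hΨ hf hε measurableSet_Ioc step_le

end Integral

/-- Proposition 5.7, analytic content: for strictly positive measurable `Ψ` and
measurable `f ≥ 0`, for every `t ≥ 0` and `ε > 0`,
`∫_0^t ∫ |sin(√Ψ(r+ε)) − sin(√Ψ r)|²/Ψ ⬝ f dξ dr + ∫_0^ε ∫ sin²(√Ψ r)/Ψ ⬝ f dξ dr
  ≤ (8t + 6ε) ∫ f/((1/ε²) + Ψ)`. -/
theorem stmt_7 (d : ℕ) (hd : 1 ≤ d)
    (Ψ : EuclideanSpace ℝ (Fin d) → ℝ) (hΨ : Measurable Ψ) (hpos : ∀ ξ, 0 < Ψ ξ)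
    (f : EuclideanSpace ℝ (Fin d) → ℝ) (hf : Measurable f) (hf0 : ∀ ξ, 0 ≤ f ξ)
    (t ε : ℝ) (ht : 0 ≤ t) (hε : 0 < ε) :
    (∫⁻ r in Set.Ioc (0 : ℝ) t, ∫⁻ ξ,
        ENNReal.ofReal (|Real.sin (Real.sqrt (Ψ ξ) * (r + ε)) -
            Real.sin (Real.sqrt (Ψ ξ) * r)| ^ 2 / Ψ ξ * f ξ)) +
      (∫⁻ r in Set.Ioc (0 : ℝ) ε, ∫⁻ ξ,
        ENNReal.ofReal ((Real.sin (Real.sqrt (Ψ ξ) * r)) ^ 2 / Ψ ξ * f ξ))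
      ≤ ENNReal.ofReal (8 * t + 6 * ε) *
          (∫⁻ ξ, ENNReal.ofReal (f ξ / (1 / ε ^ 2 + Ψ ξ))) := by
  refine (stmt_7_general hpos hf0 ht hε).trans ?_
  gcongr
  linarith
end

section
/- Let Ψ : ℝ → ℂ be measurable with Re Ψ(ξ) ≥ 0 for every ξ, and suppose ∫_ℝ dξ/(1 + Re Ψ(ξ)) < ∞. Then: (i) for every t > 0 the function ξ ↦ e^{−tΨ(ξ)} is Lebesgue integrable on ℝ; (ii) the function p(t,x) := (2π)^{−1} ∫_ℝ e^{−i x ξ − t Ψ(ξ)} dξ is continuous on (0,∞) × ℝ, and for all 0 < ε < T it is uniformly continuous on [ε,T] × ℝ. -/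
open MeasureTheory

/-!
For `Re Ψ ≥ 0` and `t ≥ ε > 0` the integrand has modulus `e^{-t Re Ψ} ≤ e^{-ε Re Ψ}`, which is at
most a constant times `1 / (1 + Re Ψ)`, uniformly in `(t, x)`. For each frequency `ξ` the exponent
is linear in `(t, x)` and takes values in the left half-plane, where `exp` is 1-Lipschitz, so the
integrand is uniformly continuous in `(t, x)`. Dominated convergence along the uniformity of
`[ε, ∞) × E` carries this over to the integral.
-/

open Filter Topology Uniformity RealInnerProductSpace

section DominatedIntegral

variable {X α G : Type*} [UniformSpace X] [IsCountablyGenerated (𝓤 X)] [MeasurableSpace α]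
  {μ : Measure α} [NormedAddCommGroup G] [NormedSpace ℝ G]

theorem uniformContinuousOn_integral_of_dominated {F : X → α → G} {s : Set X} {bound : α → ℝ}
    (hF_meas : ∀ x ∈ s, AEStronglyMeasurable (F x) μ)
    (h_bound : ∀ x ∈ s, ∀ᵐ a ∂μ, ‖F x a‖ ≤ bound a) (bound_integrable : Integrable bound μ)
    (h_cont : ∀ᵐ a ∂μ, UniformContinuousOn (F · a) s) :
    UniformContinuousOn (fun x ↦ ∫ a, F x a ∂μ) s := by
  have hF_int (x) (hx : x ∈ s) : Integrable (F x) μ :=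
    bound_integrable.mono' (hF_meas x hx) (h_bound x hx)
  have h_mem : ∀ᶠ p in 𝓤 X ⊓ 𝓟 (s ×ˢ s), p.1 ∈ s ∧ p.2 ∈ s :=
    mem_inf_of_right (mem_principal_self _)
  simp only [UniformContinuousOn, uniformity_eq_comap_nhds_zero G, tendsto_comap_iff] at h_cont ⊢
  have h_lim : Tendsto (fun p : X × X ↦ ∫ a, (F p.2 a - F p.1 a) ∂μ)
      (𝓤 X ⊓ 𝓟 (s ×ˢ s)) (𝓝 (∫ _, 0 ∂μ)) := by
    refine tendsto_integral_filter_of_dominated_convergence (fun a ↦ bound a + bound a) ?_ ?_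
      (bound_integrable.add bound_integrable) h_cont
    · filter_upwards [h_mem] with p ⟨h₁, h₂⟩ using (hF_meas _ h₂).sub (hF_meas _ h₁)
    · filter_upwards [h_mem] with p ⟨h₁, h₂⟩
      filter_upwards [h_bound _ h₁, h_bound _ h₂] with a ha₁ ha₂ using norm_sub_le_of_le ha₂ ha₁
  rw [integral_zero] at h_lim
  refine h_lim.congr' ?_
  filter_upwards [h_mem] with p ⟨h₁, h₂⟩ using integral_sub (hF_int _ h₂) (hF_int _ h₁)

end DominatedIntegral

theorem lipschitzOnWith_cexp_re_nonpos : LipschitzOnWith 1 Complex.exp {z | z.re ≤ 0} :=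
  (convex_halfSpace_re_le 0).lipschitzOnWith_of_nnnorm_hasDerivWithin_le
    (fun z _ ↦ (Complex.hasDerivAt_exp z).hasDerivWithinAt)
    fun z hz ↦ by
      rw [← NNReal.coe_le_coe, coe_nnnorm, Complex.norm_exp]
      exact Real.exp_le_one_iff.mpr hz

theorem exp_neg_mul_le_mul_one_div_one_add {ε t r : ℝ} (hε : 0 < ε) (ht : ε ≤ t) (hr : 0 ≤ r) :
    Real.exp (-(t * r)) ≤ (1 + 1 / ε) * (1 / (1 + r)) :=
  calc Real.exp (-(t * r)) ≤ Real.exp (-(ε * r)) := by gcongr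
    _ = 1 / Real.exp (ε * r) := by rw [Real.exp_neg, one_div]
    _ ≤ 1 / (ε * r + 1) := by gcongr; exact Real.add_one_le_exp _
    _ ≤ (1 + 1 / ε) * (1 / (1 + r)) := by
      rw [mul_one_div, div_le_div_iff₀ (by positivity) (by positivity)]
      have expand : (1 + 1 / ε) * (ε * r + 1) = 1 * (1 + r) + (ε * r + 1 / ε) := by
        field_simp
        ring
      rw [expand]
      exact le_add_of_nonneg_right (by positivity)

theorem integrable_cexp_neg_mul {α : Type*} [MeasurableSpace α] {μ : Measure α} {Ψ : α → ℂ}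
    (hΨ : AEStronglyMeasurable Ψ μ) (hre : ∀ᵐ a ∂μ, 0 ≤ (Ψ a).re)
    (hint : Integrable (fun a ↦ 1 / (1 + (Ψ a).re)) μ) {t : ℝ} (ht : 0 < t) :
    Integrable (fun a ↦ Complex.exp (-(t : ℂ) * Ψ a)) μ := by
  refine (hint.const_mul (1 + 1 / t)).mono'
    (Complex.continuous_exp.comp_aestronglyMeasurable (hΨ.const_mul _)) ?_
  filter_upwards [hre] with a ha
  simpa [Complex.norm_exp] using exp_neg_mul_le_mul_one_div_one_add ht le_rfl ha

section InverseFourier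

variable {E : Type*} [NormedAddCommGroup E] [InnerProductSpace ℝ E]

theorem norm_cexp_neg_I_mul_inner_sub (t : ℝ) (x ξ : E) (z : ℂ) :
    ‖Complex.exp (-(Complex.I * (⟪x, ξ⟫ : ℝ)) - t * z)‖ = Real.exp (-(t * z.re)) := by
  simp [Complex.norm_exp]

theorem uniformContinuousOn_cexp_neg_I_mul_inner_sub (ξ : E) {z : ℂ} (hz : 0 ≤ z.re) :
    UniformContinuousOn
      (fun q : ℝ × E ↦ Complex.exp (-(Complex.I * (⟪q.2, ξ⟫ : ℝ)) - q.1 * z))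
      (Set.Ici 0 ×ˢ Set.univ) := by
  let exponent : ℝ × E →L[ℝ] ℂ :=
    -((innerSL ℝ ξ ∘L .snd ℝ ℝ E).smulRight Complex.I) - (ContinuousLinearMap.fst ℝ ℝ E).smulRight z
  have exponent_apply (q : ℝ × E) :
      exponent q = -(Complex.I * (⟪q.2, ξ⟫ : ℝ)) - q.1 * z := by
    simp [exponent, real_inner_comm, mul_comm]
  simp only [← exponent_apply]
  refine lipschitzOnWith_cexp_re_nonpos.uniformContinuousOn.comp
    exponent.uniformContinuous.uniformContinuousOn fun q hq ↦ ?_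
  simpa [exponent_apply] using mul_nonneg hq.1 hz

variable [MeasurableSpace E] {μ : Measure E} {Ψ : E → ℂ}

theorem ae_norm_cexp_neg_I_mul_inner_sub_le (hre : ∀ᵐ ξ ∂μ, 0 ≤ (Ψ ξ).re) {ε t : ℝ}
    (hε : 0 < ε) (ht : ε ≤ t) (x : E) :
    ∀ᵐ ξ ∂μ, ‖Complex.exp (-(Complex.I * (⟪x, ξ⟫ : ℝ)) - t * Ψ ξ)‖ ≤
      (1 + 1 / ε) * (1 / (1 + (Ψ ξ).re)) := by
  filter_upwards [hre] with ξ hξ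
  rw [norm_cexp_neg_I_mul_inner_sub]
  exact exp_neg_mul_le_mul_one_div_one_add hε ht hξ

/-- The inverse Fourier transform at `x` of `e^{-tΨ}`, as a function of `q = (t, x)`. With respect
to `(2π)^{-d}` times Lebesgue measure on `ℝᵈ`, it is the candidate transition density of the Lévy
process with exponent `Ψ`; normalizing constants are left to the measure `μ`. -/
noncomputable def inverseFourierExp (μ : Measure E) (Ψ : E → ℂ) (q : ℝ × E) : ℂ :=
  ∫ ξ, Complex.exp (-(Complex.I * (⟪q.2, ξ⟫ : ℝ)) - q.1 * Ψ ξ) ∂μ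

theorem inverseFourierExp_real (μ : Measure ℝ) (Ψ : ℝ → ℂ) (q : ℝ × ℝ) :
    inverseFourierExp μ Ψ q =
      ∫ ξ : ℝ, Complex.exp (-(Complex.I * (q.2 : ℂ) * (ξ : ℂ)) - (q.1 : ℂ) * Ψ ξ) ∂μ := by
  simp only [inverseFourierExp, Real.inner_apply, Complex.ofReal_mul, mul_assoc]

variable [OpensMeasurableSpace E]

theorem aestronglyMeasurable_cexp_neg_I_mul_inner_sub (hΨ : AEStronglyMeasurable Ψ μ)
    (t : ℝ) (x : E) :
    AEStronglyMeasurable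
      (fun ξ ↦ Complex.exp (-(Complex.I * (⟪x, ξ⟫ : ℝ)) - t * Ψ ξ)) μ := by
  have h_phase : AEStronglyMeasurable (fun ξ ↦ -(Complex.I * (⟪x, ξ⟫ : ℝ))) μ :=
    Continuous.aestronglyMeasurable (by fun_prop)
  exact Complex.continuous_exp.comp_aestronglyMeasurable (h_phase.sub (hΨ.const_mul _))

theorem uniformContinuousOn_inverseFourierExp (hΨ : AEStronglyMeasurable Ψ μ)
    (hre : ∀ᵐ ξ ∂μ, 0 ≤ (Ψ ξ).re) (hint : Integrable (fun ξ ↦ 1 / (1 + (Ψ ξ).re)) μ)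
    {ε : ℝ} (hε : 0 < ε) :
    UniformContinuousOn (inverseFourierExp μ Ψ) (Set.Ici ε ×ˢ Set.univ) := by
  refine uniformContinuousOn_integral_of_dominated
    (fun q _ ↦ aestronglyMeasurable_cexp_neg_I_mul_inner_sub hΨ q.1 q.2)
    (fun q hq ↦ ae_norm_cexp_neg_I_mul_inner_sub_le hre hε hq.1 q.2) (hint.const_mul _) ?_
  filter_upwards [hre] with ξ hξ
  exact (uniformContinuousOn_cexp_neg_I_mul_inner_sub ξ hξ).mono
    (Set.prod_mono_left (Set.Ici_subset_Ici.mpr hε.le))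

theorem continuousOn_inverseFourierExp (hΨ : AEStronglyMeasurable Ψ μ)
    (hre : ∀ᵐ ξ ∂μ, 0 ≤ (Ψ ξ).re) (hint : Integrable (fun ξ ↦ 1 / (1 + (Ψ ξ).re)) μ) :
    ContinuousOn (inverseFourierExp μ Ψ) (Set.Ioi 0 ×ˢ Set.univ) := by
  rintro ⟨t, x⟩ ⟨ht : 0 < t, -⟩
  have h_near : Set.Ici (t / 2) ×ˢ Set.univ ∈ 𝓝 (t, x) :=
    prod_mem_nhds (Ici_mem_nhds (half_lt_self ht)) univ_mem
  exact ((uniformContinuousOn_inverseFourierExp hΨ hre hint (half_pos ht)).continuousOn.continuousAt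
    h_near).continuousWithinAt

theorem stmt_9_general (hΨ : AEStronglyMeasurable Ψ μ) (hre : ∀ᵐ ξ ∂μ, 0 ≤ (Ψ ξ).re)
    (hint : Integrable (fun ξ ↦ 1 / (1 + (Ψ ξ).re)) μ) :
    (∀ t : ℝ, 0 < t → Integrable (fun ξ ↦ Complex.exp (-(t : ℂ) * Ψ ξ)) μ) ∧
    ContinuousOn (inverseFourierExp μ Ψ) (Set.Ioi 0 ×ˢ Set.univ) ∧
    ∀ ε : ℝ, 0 < ε → UniformContinuousOn (inverseFourierExp μ Ψ) (Set.Ici ε ×ˢ Set.univ) :=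
  ⟨fun _ ↦ integrable_cexp_neg_mul hΨ hre hint, continuousOn_inverseFourierExp hΨ hre hint,
    fun _ ↦ uniformContinuousOn_inverseFourierExp hΨ hre hint⟩

end InverseFourier

/-- Lemma 8.1 (part): if `Re Ψ ≥ 0` and `∫ dξ/(1 + Re Ψ(ξ)) < ∞`, then
(i) `ξ ↦ e^{−tΨ(ξ)}` is integrable for each `t > 0`; (ii) the Fourier-inversion
density `p(t,x) = (2π)⁻¹ ∫ e^{−ixξ − tΨ(ξ)} dξ` is continuous on `(0,∞) × ℝ`
and uniformly continuous on `[ε,T] × ℝ` for all `0 < ε < T`. -/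
theorem stmt_9 (Ψ : ℝ → ℂ) (hΨ : Measurable Ψ) (hre : ∀ ξ, 0 ≤ (Ψ ξ).re)
    (hint : Integrable (fun ξ : ℝ => 1 / (1 + (Ψ ξ).re))) :
    (∀ t : ℝ, 0 < t → Integrable (fun ξ : ℝ => Complex.exp (-(t : ℂ) * Ψ ξ))) ∧
    ContinuousOn
      (fun q : ℝ × ℝ => (2 * Real.pi)⁻¹ •
        ∫ ξ : ℝ, Complex.exp (-(Complex.I * (q.2 : ℂ) * (ξ : ℂ)) - (q.1 : ℂ) * Ψ ξ))
      (Set.Ioi 0 ×ˢ Set.univ) ∧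
    (∀ ε T : ℝ, 0 < ε → ε < T →
      UniformContinuousOn
        (fun q : ℝ × ℝ => (2 * Real.pi)⁻¹ •
          ∫ ξ : ℝ, Complex.exp (-(Complex.I * (q.2 : ℂ) * (ξ : ℂ)) - (q.1 : ℂ) * Ψ ξ))
        (Set.Icc ε T ×ˢ Set.univ)) := by
  have h_scale : UniformContinuous fun z : ℂ ↦ (2 * Real.pi)⁻¹ • z :=
    uniformContinuous_const_smul _
  obtain ⟨h_int, h_cont, h_unif⟩ := stmt_9_general hΨ.aestronglyMeasurable (.of_forall hre) hint
  simp only [← inverseFourierExp_real]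
  exact ⟨h_int, h_scale.continuous.comp_continuousOn h_cont, fun ε T hε _ ↦
    h_scale.comp_uniformContinuousOn
      ((h_unif ε hε).mono (Set.prod_mono_left Set.Icc_subset_Ici_self))⟩
end

section
/- Let R : ℝ → [0,∞) be measurable with ∫_ℝ dξ/(1 + R(ξ)) < ∞. Then for every η > 0 there exists a constant C ∈ (0,∞) such that for all t ≥ 0, ∫_0^t ∫_ℝ e^{−2 s R(ξ)} dξ ds ≤ C e^{η t}. -/
open MeasureTheory

/-!
For `r ≥ 0` and `c > 0`, the integral `∫_0^t e^{-csr} ds` is at most `t` because the integrand is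
at most `1`, and `r` times it is at most `1 / c` by the fundamental theorem of calculus. Adding
the two bounds gives `∫_0^t e^{-csr} ds ≤ (t + 1 / c) / (1 + r)`. By Tonelli the double integral
therefore grows at most linearly in `t`, hence more slowly than `e^{ηt}` for any `η > 0`.
-/

open scoped ENNReal

theorem integral_exp_neg_mul_le {c r t : ℝ} (hc : 0 ≤ c) (hr : 0 ≤ r) (ht : 0 ≤ t) :
    ∫ s in (0 : ℝ)..t, Real.exp (-c * s * r) ≤ t := by
  have h_le_one : ∀ s ∈ Set.Icc 0 t, Real.exp (-c * s * r) ≤ 1 := fun s hs => by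
    have : 0 ≤ c * s * r := mul_nonneg (mul_nonneg hc hs.1) hr
    exact Real.exp_le_one_iff.2 (by linarith)
  calc ∫ s in (0 : ℝ)..t, Real.exp (-c * s * r)
      ≤ ∫ _ in (0 : ℝ)..t, (1 : ℝ) :=
        intervalIntegral.integral_mono_on ht (Continuous.intervalIntegrable (by fun_prop) _ _)
          (continuous_const.intervalIntegrable _ _) h_le_one
    _ = t := by simp

theorem mul_integral_exp_neg_mul {c : ℝ} (hc : c ≠ 0) (r t : ℝ) :
    r * ∫ s in (0 : ℝ)..t, Real.exp (-c * s * r) = (1 - Real.exp (-c * t * r)) / c := by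
  have hderiv (s : ℝ) :
      HasDerivAt (fun s => -Real.exp (-c * s * r) / c) (r * Real.exp (-c * s * r)) s := by
    have hlin : HasDerivAt (fun s : ℝ => -c * s * r) (-c * r) s := by
      simpa using ((hasDerivAt_id s).const_mul (-c)).mul_const r
    exact (hlin.exp.neg.div_const c).congr_deriv (by field_simp)
  rw [← intervalIntegral.integral_const_mul,
    intervalIntegral.integral_eq_sub_of_hasDerivAt (fun s _ => hderiv s)
      (Continuous.intervalIntegrable (by fun_prop) _ _)]
  simp only [mul_zero, zero_mul, Real.exp_zero]
  ring

theorem integral_exp_neg_mul_le_div_one_add {c r t : ℝ} (hc : 0 < c) (hr : 0 ≤ r) (ht : 0 ≤ t) :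
    ∫ s in (0 : ℝ)..t, Real.exp (-c * s * r) ≤ (t + 1 / c) / (1 + r) := by
  have h_mul_le : r * ∫ s in (0 : ℝ)..t, Real.exp (-c * s * r) ≤ 1 / c := by
    rw [mul_integral_exp_neg_mul hc.ne']
    gcongr
    exact sub_le_self _ (Real.exp_nonneg _)
  rw [le_div_iff₀ (by positivity)]
  linarith [integral_exp_neg_mul_le hc.le hr ht]

theorem setLIntegral_exp_neg_mul_le {c r t : ℝ} (hc : 0 < c) (hr : 0 ≤ r) (ht : 0 ≤ t) :
    ∫⁻ s in Set.Ioc 0 t, ENNReal.ofReal (Real.exp (-c * s * r))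
      ≤ ENNReal.ofReal (t + 1 / c) * ENNReal.ofReal (1 / (1 + r)) := by
  have hint : IntegrableOn (fun s => Real.exp (-c * s * r)) (Set.Ioc 0 t) :=
    (Continuous.integrableOn_Icc (by fun_prop)).mono_set Set.Ioc_subset_Icc_self
  rw [← ofReal_integral_eq_lintegral_ofReal hint (.of_forall fun _ => Real.exp_nonneg _),
    ← intervalIntegral.integral_of_le ht, ← ENNReal.ofReal_mul (by positivity), mul_one_div]
  exact ENNReal.ofReal_le_ofReal (integral_exp_neg_mul_le_div_one_add hc hr ht)

theorem stmt_10_general {α : Type*} [MeasurableSpace α] {μ : Measure α} [SFinite μ] {R : α → ℝ}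
    (hR : AEMeasurable R μ) (hR0 : 0 ≤ᵐ[μ] R) {c t : ℝ} (hc : 0 < c) (ht : 0 ≤ t) :
    ∫⁻ s in Set.Ioc (0 : ℝ) t, (∫⁻ ξ, ENNReal.ofReal (Real.exp (-c * s * R ξ)) ∂μ)
      ≤ ENNReal.ofReal (t + 1 / c) * ∫⁻ ξ, ENNReal.ofReal (1 / (1 + R ξ)) ∂μ := by
  have hmeas : AEMeasurable
      (Function.uncurry fun (s : ℝ) ξ => ENNReal.ofReal (Real.exp (-c * s * R ξ)))
      ((volume.restrict (Set.Ioc 0 t)).prod μ) :=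
    (((measurable_fst.const_mul (-c)).aemeasurable.mul hR.comp_snd).exp).ennreal_ofReal
  calc ∫⁻ s in Set.Ioc (0 : ℝ) t, (∫⁻ ξ, ENNReal.ofReal (Real.exp (-c * s * R ξ)) ∂μ)
      = ∫⁻ ξ, (∫⁻ s in Set.Ioc (0 : ℝ) t, ENNReal.ofReal (Real.exp (-c * s * R ξ))) ∂μ :=
        lintegral_lintegral_swap hmeas
    _ ≤ ∫⁻ ξ, ENNReal.ofReal (t + 1 / c) * ENNReal.ofReal (1 / (1 + R ξ)) ∂μ :=
        lintegral_mono_ae (hR0.mono fun _ hr => setLIntegral_exp_neg_mul_le hc hr ht)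
    _ = ENNReal.ofReal (t + 1 / c) * ∫⁻ ξ, ENNReal.ofReal (1 / (1 + R ξ)) ∂μ :=
        lintegral_const_mul' _ _ ENNReal.ofReal_ne_top

theorem add_le_mul_exp {η b t : ℝ} (hη : 0 < η) (hb : 0 ≤ b) (ht : 0 ≤ t) :
    t + b ≤ (1 / η + b) * Real.exp (η * t) := by
  have h_t : t ≤ 1 / η * Real.exp (η * t) := by
    rw [one_div_mul_eq_div, le_div_iff₀' hη]
    linarith [Real.add_one_le_exp (η * t)]
  have h_b : b ≤ b * Real.exp (η * t) :=
    le_mul_of_one_le_right hb (Real.one_le_exp (by positivity))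
  linarith

theorem exists_ofReal_add_mul_le_ofReal_mul_exp {η b : ℝ} {I : ℝ≥0∞} (hη : 0 < η) (hb : 0 ≤ b)
    (hI : I ≠ ∞) :
    ∃ C : ℝ, 0 < C ∧ ∀ t : ℝ, 0 ≤ t →
      ENNReal.ofReal (t + b) * I ≤ ENNReal.ofReal (C * Real.exp (η * t)) := by
  refine ⟨(1 / η + b) * (I.toReal + 1), by positivity, fun t ht => ?_⟩
  rw [← ENNReal.ofReal_toReal hI, ← ENNReal.ofReal_mul (by positivity),
    ENNReal.toReal_ofReal ENNReal.toReal_nonneg, mul_right_comm]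
  gcongr
  · exact add_le_mul_exp hη hb ht
  · linarith

/-- Lemma 8.1 (part): if `R : ℝ → [0,∞)` is measurable with `∫ dξ/(1 + R(ξ)) < ∞`,
then for every `η > 0` there is `C ∈ (0,∞)` with
`∫_0^t ∫ e^{−2sR(ξ)} dξ ds ≤ C e^{ηt}` for all `t ≥ 0`. -/
theorem stmt_10 (R : ℝ → ℝ) (hR : Measurable R) (hR0 : ∀ ξ, 0 ≤ R ξ)
    (hint : Integrable (fun ξ : ℝ => 1 / (1 + R ξ))) :
    ∀ η : ℝ, 0 < η → ∃ C : ℝ, 0 < C ∧ ∀ t : ℝ, 0 ≤ t →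
      (∫⁻ s in Set.Ioc (0 : ℝ) t, ∫⁻ ξ : ℝ, ENNReal.ofReal (Real.exp (-2 * s * R ξ)))
        ≤ ENNReal.ofReal (C * Real.exp (η * t)) := by
  intro η hη
  obtain ⟨C, hC, hle⟩ :=
    exists_ofReal_add_mul_le_ofReal_mul_exp hη one_half_pos.le hint.lintegral_lt_top.ne
  exact ⟨C, hC, fun t ht =>
    (stmt_10_general hR.aemeasurable (.of_forall hR0) two_pos ht).trans (hle t ht)⟩
end

section
/- Let d ≥ 1, let R : ℝ^d → [0,∞) be measurable, and let γ > d. Suppose there exist constants M > 0 and c > 0 such that R(ξ) ≥ c‖ξ‖^γ whenever ‖ξ‖ ≥ M. Then there exists a constant C ∈ (0,∞) such that for every ε ∈ (0,1], ∫_{ℝ^d} dξ/((1/ε) + R(ξ)) ≤ C · ε^{1 − d/γ}. -/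
open MeasureTheory

/-!
For `ε ≤ 1`, the hypotheses on `R` make `1/ε + R ξ` at least a constant multiple of `1/ε + ‖ξ‖ ^ γ`,
so `R` may be replaced by `‖·‖ ^ γ`. The substitution `x = ε ^ (1/γ) • ξ` then shows that the
integral is exactly `ε ^ (1 - d/γ)` times its value at `ε = 1`, which is finite because `d < γ`.
-/

open Module

theorem one_add_rpow_le_two_rpow_mul {t p : ℝ} (ht : 0 ≤ t) (hp : 0 ≤ p) :
    (1 + t) ^ p ≤ 2 ^ p * (1 + t ^ p) :=
  calc
    (1 + t) ^ p ≤ (2 * max 1 t) ^ p := by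
      gcongr
      linarith [le_max_left 1 t, le_max_right 1 t]
    _ = 2 ^ p * max 1 (t ^ p) := by
      rw [Real.mul_rpow (by positivity) (by positivity), Real.rpow_max zero_le_one ht hp,
        Real.one_rpow]
    _ ≤ 2 ^ p * (1 + t ^ p) := by
      gcongr
      exact max_le_add_of_nonneg zero_le_one (by positivity)

theorem inv_add_le_mul_inv_add {u r t A B : ℝ} (hu : 1 ≤ u) (hr : 0 ≤ r) (ht : 0 ≤ t)
    (hA : 0 ≤ A) (hB : 0 ≤ B) (htr : t ≤ A + B * r) :
    (u + r)⁻¹ ≤ (1 + A + B) * (u + t)⁻¹ := by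
  have : 0 < u := by linarith
  have hAu : A ≤ A * u := le_mul_of_one_le_right hA hu
  have hcomparison : u + t ≤ (1 + A + B) * (u + r) :=
    calc
      u + t ≤ u + A * u + B * r := by linarith
      _ ≤ u + A * u + B * r + (r + A * r + B * u) := le_add_of_nonneg_right (by positivity)
      _ = (1 + A + B) * (u + r) := by ring
  rw [← div_eq_mul_inv, inv_le_comm₀ (by positivity) (by positivity), inv_div]
  exact div_le_of_le_mul₀ (by positivity) (by positivity) (by linarith)

theorem norm_rpow_le_abs_rpow_add_inv_mul {E : Type*} [SeminormedAddGroup E] {R : E → ℝ}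
    {γ M c : ℝ} (hR0 : ∀ ξ, 0 ≤ R ξ) (hγ : 0 ≤ γ) (hc : 0 < c)
    (hlb : ∀ ξ, M ≤ ‖ξ‖ → c * ‖ξ‖ ^ γ ≤ R ξ) (ξ : E) :
    ‖ξ‖ ^ γ ≤ |M| ^ γ + c⁻¹ * R ξ := by
  have hRξ := hR0 ξ
  rcases le_total M ‖ξ‖ with hfar | hnear
  · have : ‖ξ‖ ^ γ ≤ c⁻¹ * R ξ := (le_inv_mul_iff₀ hc).2 (hlb ξ hfar)
    exact this.trans (le_add_of_nonneg_left (by positivity))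
  · have : ‖ξ‖ ^ γ ≤ |M| ^ γ := by
      gcongr
      exact hnear.trans (le_abs_self M)
    exact this.trans (le_add_of_nonneg_right (by positivity))

section HaarMeasure

variable {E : Type*} [NormedAddCommGroup E] [NormedSpace ℝ E] [FiniteDimensional ℝ E]
  [MeasurableSpace E] [BorelSpace E] (μ : Measure E) [μ.IsAddHaarMeasure]

theorem integrable_inv_add_norm_rpow {a γ : ℝ} (ha : 0 < a) (hγ : (finrank ℝ E : ℝ) < γ) :
    Integrable (fun x : E => (a + ‖x‖ ^ γ)⁻¹) μ := by
  have hγ₀ : 0 ≤ γ := (Nat.cast_nonneg _).trans hγ.le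
  refine ((integrable_one_add_norm (μ := μ) hγ).const_mul (2 ^ γ * (1 + a⁻¹))).mono'
    (by fun_prop) (.of_forall fun x => ?_)
  have hshift : 1 + ‖x‖ ^ γ ≤ (1 + a⁻¹) * (a + ‖x‖ ^ γ) :=
    calc
      1 + ‖x‖ ^ γ ≤ 1 + ‖x‖ ^ γ + (a + a⁻¹ * ‖x‖ ^ γ) := le_add_of_nonneg_right (by positivity)
      _ = (1 + a⁻¹) * (a + ‖x‖ ^ γ) := by field
  have hbracket : (1 + ‖x‖) ^ γ ≤ 2 ^ γ * (1 + a⁻¹) * (a + ‖x‖ ^ γ) :=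
    calc
      (1 + ‖x‖) ^ γ ≤ 2 ^ γ * (1 + ‖x‖ ^ γ) := one_add_rpow_le_two_rpow_mul (norm_nonneg x) hγ₀
      _ ≤ 2 ^ γ * ((1 + a⁻¹) * (a + ‖x‖ ^ γ)) := by gcongr
      _ = 2 ^ γ * (1 + a⁻¹) * (a + ‖x‖ ^ γ) := (mul_assoc _ _ _).symm
  rw [Real.norm_of_nonneg (by positivity), Real.rpow_neg (by positivity), ← div_eq_mul_inv,
    le_div_iff₀ (by positivity), inv_mul_le_iff₀ (by positivity), mul_comm (a + _)]
  exact hbracket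

theorem integral_inv_add_norm_rpow_pos {a γ : ℝ} (ha : 0 < a) (hγ : (finrank ℝ E : ℝ) < γ) :
    0 < ∫ x : E, (a + ‖x‖ ^ γ)⁻¹ ∂μ := by
  have hpos (x : E) : 0 < (a + ‖x‖ ^ γ)⁻¹ := by positivity
  have hsupport : Function.support (fun x : E => (a + ‖x‖ ^ γ)⁻¹) = Set.univ :=
    Set.eq_univ_of_forall fun x => (hpos x).ne'
  rw [integral_pos_iff_support_of_nonneg (fun x => (hpos x).le)
    (integrable_inv_add_norm_rpow μ ha hγ), hsupport]
  exact Measure.measure_univ_pos.2 (NeZero.ne μ)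

theorem integral_inv_inv_add_norm_rpow {ε γ : ℝ} (hε : 0 < ε) (hγ : γ ≠ 0) :
    ∫ ξ : E, (ε⁻¹ + ‖ξ‖ ^ γ)⁻¹ ∂μ =
      ε ^ (1 - (finrank ℝ E : ℝ) / γ) * ∫ x : E, (1 + ‖x‖ ^ γ)⁻¹ ∂μ := by
  set s : ℝ := ε ^ γ⁻¹
  have hs : 0 ≤ s := by positivity
  have hscale (ξ : E) : (ε⁻¹ + ‖ξ‖ ^ γ)⁻¹ = ε * (1 + ‖s • ξ‖ ^ γ)⁻¹ := by
    rw [norm_smul_of_nonneg hs, Real.mul_rpow hs (norm_nonneg ξ), Real.rpow_inv_rpow hε.le hγ]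
    field
  have hjacobian : ε * (s ^ finrank ℝ E)⁻¹ = ε ^ (1 - (finrank ℝ E : ℝ) / γ) := by
    rw [Real.rpow_sub hε, Real.rpow_one, ← div_eq_mul_inv, ← Real.rpow_mul_natCast hε.le,
      inv_mul_eq_div]
  simp_rw [hscale]
  rw [integral_const_mul,
    Measure.integral_comp_smul_of_nonneg μ (fun x : E => (1 + ‖x‖ ^ γ)⁻¹) s (hR := hs),
    smul_eq_mul, ← mul_assoc, hjacobian]

theorem lintegral_inv_inv_add_le_of_norm_rpow_le {R : E → ℝ} {γ A B ε : ℝ}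
    (hR0 : ∀ ξ, 0 ≤ R ξ) (hγ : (finrank ℝ E : ℝ) < γ) (hA : 0 ≤ A) (hB : 0 ≤ B)
    (hR : ∀ ξ, ‖ξ‖ ^ γ ≤ A + B * R ξ) (hε : 0 < ε) (hε1 : ε ≤ 1) :
    ∫⁻ ξ, ENNReal.ofReal (ε⁻¹ + R ξ)⁻¹ ∂μ ≤
      ENNReal.ofReal ((1 + A + B) * (∫ x : E, (1 + ‖x‖ ^ γ)⁻¹ ∂μ) *
        ε ^ (1 - (finrank ℝ E : ℝ) / γ)) := by
  have hγ₀ : 0 < γ := (Nat.cast_nonneg _).trans_lt hγ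
  have hint : Integrable (fun ξ : E => (1 + A + B) * (ε⁻¹ + ‖ξ‖ ^ γ)⁻¹) μ :=
    (integrable_inv_add_norm_rpow μ (inv_pos.2 hε) hγ).const_mul _
  calc
    ∫⁻ ξ, ENNReal.ofReal (ε⁻¹ + R ξ)⁻¹ ∂μ
      ≤ ∫⁻ ξ, ENNReal.ofReal ((1 + A + B) * (ε⁻¹ + ‖ξ‖ ^ γ)⁻¹) ∂μ := by
        gcongr with ξ
        exact inv_add_le_mul_inv_add ((one_le_inv₀ hε).2 hε1) (hR0 ξ) (by positivity) hA hB (hR ξ)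
    _ = ENNReal.ofReal (∫ ξ, (1 + A + B) * (ε⁻¹ + ‖ξ‖ ^ γ)⁻¹ ∂μ) :=
        (ofReal_integral_eq_lintegral_ofReal hint (.of_forall fun ξ => by positivity)).symm
    _ = _ := by
        rw [integral_const_mul, integral_inv_inv_add_norm_rpow μ hε hγ₀.ne', mul_right_comm,
          mul_assoc]

theorem stmt_11_general {R : E → ℝ} (hR0 : ∀ ξ, 0 ≤ R ξ) {γ : ℝ}
    (hγ : (finrank ℝ E : ℝ) < γ) {M c : ℝ} (hc : 0 < c)
    (hlb : ∀ ξ, M ≤ ‖ξ‖ → c * ‖ξ‖ ^ γ ≤ R ξ) :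
    ∃ C : ℝ, 0 < C ∧ ∀ ε : ℝ, 0 < ε → ε ≤ 1 →
      ∫⁻ ξ, ENNReal.ofReal (1 / (1 / ε + R ξ)) ∂μ ≤
        ENNReal.ofReal (C * ε ^ (1 - (finrank ℝ E : ℝ) / γ)) := by
  have hγ₀ : 0 ≤ γ := (Nat.cast_nonneg _).trans hγ.le
  have hI : 0 < ∫ x : E, (1 + ‖x‖ ^ γ)⁻¹ ∂μ := integral_inv_add_norm_rpow_pos μ one_pos hγ
  refine ⟨(1 + |M| ^ γ + c⁻¹) * ∫ x : E, (1 + ‖x‖ ^ γ)⁻¹ ∂μ, by positivity, fun ε hε hε1 => ?_⟩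
  simp only [one_div]
  exact lintegral_inv_inv_add_le_of_norm_rpow_le μ hR0 hγ (by positivity) (by positivity)
    (norm_rpow_le_abs_rpow_add_inv_mul hR0 hγ₀ hc hlb) hε hε1

end HaarMeasure

/-- Key estimate in Theorem 2.7: if `R : ℝ^d → [0,∞)` is measurable, `γ > d`,
and `R(ξ) ≥ c‖ξ‖^γ` for `‖ξ‖ ≥ M` (some `M, c > 0`), then there is `C ∈ (0,∞)`
with `∫ dξ/((1/ε) + R(ξ)) ≤ C ε^{1 − d/γ}` for every `ε ∈ (0,1]`. -/
theorem stmt_11 (d : ℕ) (hd : 1 ≤ d)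
    (R : EuclideanSpace ℝ (Fin d) → ℝ) (hR : Measurable R) (hR0 : ∀ ξ, 0 ≤ R ξ)
    (γ : ℝ) (hγ : (d : ℝ) < γ)
    (M c : ℝ) (hM : 0 < M) (hc : 0 < c)
    (hlb : ∀ ξ, M ≤ ‖ξ‖ → c * ‖ξ‖ ^ γ ≤ R ξ) :
    ∃ C : ℝ, 0 < C ∧ ∀ ε : ℝ, 0 < ε → ε ≤ 1 →
      (∫⁻ ξ, ENNReal.ofReal (1 / (1 / ε + R ξ)))
        ≤ ENNReal.ofReal (C * ε ^ (1 - (d : ℝ) / γ)) := by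
  simpa only [finrank_euclideanSpace_fin] using
    stmt_11_general volume hR0 (by rwa [finrank_euclideanSpace_fin]) hc hlb
end

section
/- Let R : ℝ → [0,∞) be measurable and let γ ∈ (1,2]. Suppose there exist constants M > 0 and c > 0 such that R(ξ) ≥ c|ξ|^γ whenever |ξ| ≥ M. Then there exists a constant C ∈ (0,∞) such that for every r ∈ (0,1], ∫_ℝ (1 − cos(rξ))/(1 + R(ξ)) dξ ≤ C · r^{γ−1}. -/
open MeasureTheory

/-!
For `0 ≤ p ≤ 2` one has `1 - cos u ≤ 2 |u| ^ p`. On `|ξ| < M` the choice `p = γ - 1` already gives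
the factor `|r| ^ (γ - 1)`. On `|ξ| ≥ M` the integrand is at most `c⁻¹ (1 - cos (r ξ)) / |ξ| ^ γ`,
whose integral over the line is `|r| ^ (γ - 1)` times its value at `r = 1` by the substitution
`u = r ξ`. That value is finite for `1 < γ < 3`: the case `p = 2` controls the singularity at `0`,
the case `p = 0` the tail.
-/

open Asymptotics Filter Metric Set Topology

lemma one_sub_cos_nonneg (u : ℝ) : 0 ≤ 1 - Real.cos u :=
  sub_nonneg.mpr (Real.cos_le_one u)

lemma one_sub_cos_le_two_mul_abs_rpow {p : ℝ} (hp0 : 0 ≤ p) (hp2 : p ≤ 2) (u : ℝ) :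
    1 - Real.cos u ≤ 2 * |u| ^ p := by
  rcases le_total 1 |u| with hu | hu
  · have h_one_le : 1 ≤ |u| ^ p := Real.one_le_rpow hu hp0
    linarith [Real.neg_one_le_cos u]
  · have h_sq_le : u ^ 2 ≤ |u| ^ p := by
      rw [← sq_abs, ← Real.rpow_two]
      exact Real.rpow_le_rpow_of_exponent_ge_of_imp (abs_nonneg u) hu hp2 (by grind)
    linarith [Real.one_sub_sq_div_two_le_cos (x := u), sq_nonneg u]

lemma isBigO_one_sub_cos_abs_rpow {p : ℝ} (hp0 : 0 ≤ p) (hp2 : p ≤ 2) (l : Filter ℝ) :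
    (fun u ↦ 1 - Real.cos u) =O[l] fun u ↦ |u| ^ p := by
  refine .of_bound 2 (.of_forall fun u ↦ ?_)
  rw [Real.norm_of_nonneg (one_sub_cos_nonneg u), Real.norm_of_nonneg (by positivity)]
  exact one_sub_cos_le_two_mul_abs_rpow hp0 hp2 u

lemma integrableOn_Ioi_rpow_mul_one_sub_cos {γ : ℝ} (hγ1 : 1 < γ) (hγ3 : γ < 3) :
    IntegrableOn (fun u : ℝ ↦ u ^ (-γ) * (1 - Real.cos u)) (Ioi 0) := by
  have h_top : (fun u ↦ 1 - Real.cos u) =O[atTop] fun u : ℝ ↦ u ^ (-0 : ℝ) := by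
    simpa using isBigO_one_sub_cos_abs_rpow le_rfl zero_le_two atTop
  have h_zero : (fun u ↦ 1 - Real.cos u) =O[𝓝[>] 0] fun u : ℝ ↦ u ^ (-(-2) : ℝ) := by
    simpa using isBigO_one_sub_cos_abs_rpow zero_le_two le_rfl (𝓝[>] 0)
  have h_loc : LocallyIntegrableOn (fun u ↦ 1 - Real.cos u) (Ioi 0) :=
    (by fun_prop : Continuous fun u ↦ 1 - Real.cos u).locallyIntegrable.locallyIntegrableOn _
  simpa using mellin_convergent_of_isBigO_scalar (s := 1 - γ)
    h_loc h_top (by linarith) h_zero (by linarith)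

lemma integrable_one_sub_cos_div_abs_rpow {γ : ℝ} (hγ1 : 1 < γ) (hγ3 : γ < 3) :
    Integrable fun u : ℝ ↦ (1 - Real.cos u) / |u| ^ γ := by
  have h_norm : Integrable fun u : ℝ ↦ ‖u‖ ^ (-γ) * (1 - Real.cos ‖u‖) :=
    (integrable_fun_norm_addHaar volume (f := fun t ↦ t ^ (-γ) * (1 - Real.cos t))).mpr <| by
      simpa using integrableOn_Ioi_rpow_mul_one_sub_cos hγ1 hγ3
  refine h_norm.congr (.of_forall fun u ↦ ?_)
  simp only [Real.norm_eq_abs, Real.cos_abs, Real.rpow_neg (abs_nonneg u), div_eq_inv_mul]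

lemma one_sub_cos_mul_div_abs_rpow {r : ℝ} (hr : r ≠ 0) (γ ξ : ℝ) :
    (1 - Real.cos (r * ξ)) / |ξ| ^ γ = |r| ^ γ * ((1 - Real.cos (r * ξ)) / |r * ξ| ^ γ) := by
  have hrγ : |r| ^ γ ≠ 0 := (Real.rpow_pos_of_pos (abs_pos.mpr hr) γ).ne'
  rw [abs_mul, Real.mul_rpow (abs_nonneg r) (abs_nonneg ξ), ← mul_div_assoc,
    mul_div_mul_left _ _ hrγ]

lemma integrable_one_sub_cos_mul_div_abs_rpow {γ : ℝ} (hγ1 : 1 < γ) (hγ3 : γ < 3) (r : ℝ) :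
    Integrable fun ξ : ℝ ↦ (1 - Real.cos (r * ξ)) / |ξ| ^ γ := by
  rcases eq_or_ne r 0 with rfl | hr
  · simp
  · simp only [one_sub_cos_mul_div_abs_rpow hr]
    exact ((integrable_one_sub_cos_div_abs_rpow hγ1 hγ3).comp_mul_left' hr).const_mul _

lemma integral_one_sub_cos_mul_div_abs_rpow {γ : ℝ} (hγ : γ ≠ 1) (r : ℝ) :
    ∫ ξ : ℝ, (1 - Real.cos (r * ξ)) / |ξ| ^ γ =
      |r| ^ (γ - 1) * ∫ u : ℝ, (1 - Real.cos u) / |u| ^ γ := by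
  rcases eq_or_ne r 0 with rfl | hr
  · simp [Real.zero_rpow (sub_ne_zero.mpr hγ)]
  · simp only [one_sub_cos_mul_div_abs_rpow hr]
    rw [integral_const_mul,
      Measure.integral_comp_mul_left (fun u ↦ (1 - Real.cos u) / |u| ^ γ), smul_eq_mul, abs_inv,
      Real.rpow_sub_one (abs_ne_zero.mpr hr), div_eq_mul_inv, mul_assoc]

lemma setLIntegral_ball_one_sub_cos_div_le {D : ℝ → ℝ} {γ M : ℝ} (hγ1 : 1 ≤ γ) (hγ3 : γ ≤ 3)
    (hM : 0 < M) (hD : ∀ ξ ∈ ball 0 M, 1 ≤ D ξ) (r : ℝ) :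
    ∫⁻ ξ in ball 0 M, ENNReal.ofReal ((1 - Real.cos (r * ξ)) / D ξ) ≤
      ENNReal.ofReal (4 * M ^ γ * |r| ^ (γ - 1)) := by
  have h_le : ∀ ξ ∈ ball 0 M, (1 - Real.cos (r * ξ)) / D ξ ≤ 2 * (|r| * M) ^ (γ - 1) := by
    intro ξ hξ
    calc (1 - Real.cos (r * ξ)) / D ξ
        ≤ 1 - Real.cos (r * ξ) := div_le_self (one_sub_cos_nonneg _) (hD ξ hξ)
      _ ≤ 2 * |r * ξ| ^ (γ - 1) :=
          one_sub_cos_le_two_mul_abs_rpow (by linarith) (by linarith) _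
      _ ≤ 2 * (|r| * M) ^ (γ - 1) := by
          have h_abs : |ξ| ≤ M := (mem_ball_zero_iff.mp hξ).le
          rw [abs_mul]
          gcongr
  calc ∫⁻ ξ in ball 0 M, ENNReal.ofReal ((1 - Real.cos (r * ξ)) / D ξ)
      ≤ ∫⁻ _ in ball (0 : ℝ) M, ENNReal.ofReal (2 * (|r| * M) ^ (γ - 1)) :=
        setLIntegral_mono' measurableSet_ball fun ξ hξ ↦ ENNReal.ofReal_le_ofReal (h_le ξ hξ)
    _ = ENNReal.ofReal (2 * (|r| * M) ^ (γ - 1) * (2 * M)) := by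
        rw [setLIntegral_const, Real.volume_ball, ← ENNReal.ofReal_mul (by positivity)]
    _ = ENNReal.ofReal (4 * M ^ γ * |r| ^ (γ - 1)) := by
        rw [Real.mul_rpow (abs_nonneg r) hM.le, Real.rpow_sub_one hM.ne']
        congr 1
        field_simp
        ring

lemma setLIntegral_one_sub_cos_div_le {D : ℝ → ℝ} {γ c : ℝ} {s : Set ℝ} (hγ1 : 1 < γ) (hγ3 : γ < 3)
    (hc : 0 < c) (hs : MeasurableSet s) (hD : ∀ ξ ∈ s, c * |ξ| ^ γ ≤ D ξ) (r : ℝ) :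
    ∫⁻ ξ in s, ENNReal.ofReal ((1 - Real.cos (r * ξ)) / D ξ) ≤
      ENNReal.ofReal (c⁻¹ * (∫ u : ℝ, (1 - Real.cos u) / |u| ^ γ) * |r| ^ (γ - 1)) := by
  have h_nonneg (ξ : ℝ) : 0 ≤ c⁻¹ * ((1 - Real.cos (r * ξ)) / |ξ| ^ γ) :=
    mul_nonneg (by positivity) (div_nonneg (one_sub_cos_nonneg _) (by positivity))
  have h_le : ∀ ξ ∈ s,
      (1 - Real.cos (r * ξ)) / D ξ ≤ c⁻¹ * ((1 - Real.cos (r * ξ)) / |ξ| ^ γ) := by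
    intro ξ hξ
    rcases eq_or_ne ξ 0 with rfl | hξ0
    · simp
    · calc (1 - Real.cos (r * ξ)) / D ξ
          ≤ (1 - Real.cos (r * ξ)) / (c * |ξ| ^ γ) :=
            div_le_div_of_nonneg_left (one_sub_cos_nonneg _) (by positivity) (hD ξ hξ)
        _ = c⁻¹ * ((1 - Real.cos (r * ξ)) / |ξ| ^ γ) := by
            field_simp
  calc ∫⁻ ξ in s, ENNReal.ofReal ((1 - Real.cos (r * ξ)) / D ξ)
      ≤ ∫⁻ ξ in s, ENNReal.ofReal (c⁻¹ * ((1 - Real.cos (r * ξ)) / |ξ| ^ γ)) :=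
        setLIntegral_mono' hs fun ξ hξ ↦ ENNReal.ofReal_le_ofReal (h_le ξ hξ)
    _ ≤ ∫⁻ ξ, ENNReal.ofReal (c⁻¹ * ((1 - Real.cos (r * ξ)) / |ξ| ^ γ)) :=
        setLIntegral_le_lintegral s _
    _ = ENNReal.ofReal (∫ ξ, c⁻¹ * ((1 - Real.cos (r * ξ)) / |ξ| ^ γ)) :=
        (ofReal_integral_eq_lintegral_ofReal
          ((integrable_one_sub_cos_mul_div_abs_rpow hγ1 hγ3 r).const_mul _)
          (.of_forall h_nonneg)).symm
    _ = ENNReal.ofReal (c⁻¹ * (∫ u : ℝ, (1 - Real.cos u) / |u| ^ γ) * |r| ^ (γ - 1)) := by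
        rw [integral_const_mul, integral_one_sub_cos_mul_div_abs_rpow hγ1.ne']
        congr 1
        ring

theorem stmt_12_general {R : ℝ → ℝ} (hR0 : ∀ ξ, 0 ≤ R ξ) {γ : ℝ} (hγ1 : 1 < γ) (hγ3 : γ < 3)
    {M c : ℝ} (hM : 0 < M) (hc : 0 < c) (hlb : ∀ ξ : ℝ, M ≤ |ξ| → c * |ξ| ^ γ ≤ R ξ) :
    ∃ C : ℝ, 0 < C ∧ ∀ r : ℝ,
      ∫⁻ ξ : ℝ, ENNReal.ofReal ((1 - Real.cos (r * ξ)) / (1 + R ξ)) ≤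
        ENNReal.ofReal (C * |r| ^ (γ - 1)) := by
  set K : ℝ := ∫ u : ℝ, (1 - Real.cos u) / |u| ^ γ
  have hK : 0 ≤ K :=
    integral_nonneg fun u ↦ div_nonneg (one_sub_cos_nonneg u) (by positivity)
  refine ⟨4 * M ^ γ + c⁻¹ * K, by positivity, fun r ↦ ?_⟩
  have h_low := setLIntegral_ball_one_sub_cos_div_le (D := fun ξ ↦ 1 + R ξ) hγ1.le hγ3.le hM
    (fun ξ _ ↦ le_add_of_nonneg_right (hR0 ξ)) r
  have h_high := setLIntegral_one_sub_cos_div_le (D := fun ξ ↦ 1 + R ξ) (s := (ball 0 M)ᶜ)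
    hγ1 hγ3 hc measurableSet_ball.compl
    (fun ξ hξ ↦ (hlb ξ (by simpa using hξ)).trans (le_add_of_nonneg_left zero_le_one)) r
  rw [← lintegral_add_compl _ (measurableSet_ball (x := (0 : ℝ)) (ε := M)), add_mul,
    ENNReal.ofReal_add (by positivity) (by positivity)]
  exact add_le_add h_low h_high

/-- Spatial estimate in Theorem 2.7: if `R : ℝ → [0,∞)` is measurable, `γ ∈ (1,2]`,
and `R(ξ) ≥ c|ξ|^γ` for `|ξ| ≥ M` (some `M, c > 0`), then there is `C ∈ (0,∞)` with
`∫ (1 − cos(rξ))/(1 + R(ξ)) dξ ≤ C r^{γ−1}` for every `r ∈ (0,1]`. -/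
theorem stmt_12 (R : ℝ → ℝ) (hR : Measurable R) (hR0 : ∀ ξ, 0 ≤ R ξ)
    (γ : ℝ) (hγ1 : 1 < γ) (hγ2 : γ ≤ 2)
    (M c : ℝ) (hM : 0 < M) (hc : 0 < c)
    (hlb : ∀ ξ : ℝ, M ≤ |ξ| → c * |ξ| ^ γ ≤ R ξ) :
    ∃ C : ℝ, 0 < C ∧ ∀ r : ℝ, 0 < r → r ≤ 1 →
      (∫⁻ ξ : ℝ, ENNReal.ofReal ((1 - Real.cos (r * ξ)) / (1 + R ξ)))
        ≤ ENNReal.ofReal (C * r ^ (γ - 1)) := by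
  obtain ⟨C, hC, h⟩ := stmt_12_general hR0 hγ1 (by linarith) hM hc hlb
  exact ⟨C, hC, fun r hr _ ↦ by simpa only [abs_of_pos hr] using h r⟩
end

section
/- Let E be a real inner product space, φ ∈ E, and let P : [0,∞) → (E →L[ℝ] E) be a family of continuous linear operators satisfying: P(0) = id; P(s+t) = P(s) ∘ P(t) for all s, t ≥ 0; ⟨P(t)x, y⟩ = ⟨x, P(t)y⟩ for all t ≥ 0 and x, y ∈ E (self-adjointness); ‖P(t)x‖ ≤ ‖x‖ for all t ≥ 0 and x ∈ E (contraction); and t ↦ P(t)φ is continuous on [0,∞). Define A(t) := ∫_0^t ‖P(s)φ‖² ds and B(t) := 2∫_0^t ∫_u^t ⟨P(v−u)φ, φ⟩ dv du. Then for every t ≥ 0, (1/8)·t·A(t) ≤ B(t) ≤ 4t·A(t). -/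
open MeasureTheory
open scoped RealInnerProductSpace

/-!
Put `f s = ⟪P s φ, φ⟫` and `F x = ∫_0^x f`. Symmetry gives `f (2 * s) = ‖P s φ‖ ^ 2`, so `f` is
nonnegative, it is nonincreasing by contractivity, and `A(t) = F (2 * t) / 2`. A change of variables
turns `B(t)` into `2 * ∫_0^t F`. Since `F` is nondecreasing and the means `F x / x` are
nonincreasing, `x / (2 * t) * F (2 * t) ≤ F x ≤ F (2 * t)` for `0 < x ≤ t`; integrating over `x`
yields `t * A(t) ≤ B(t) ≤ 4 * t * A(t)`.
-/

lemma intervalIntegrable_primitive {F : Type*} [NormedAddCommGroup F] [NormedSpace ℝ F]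
    {f : ℝ → F} {a b c : ℝ} (hf : IntervalIntegrable f volume a b) (hc : c ∈ Set.uIcc a b) :
    IntervalIntegrable (fun x => ∫ y in a..x, f y) volume a c :=
  ((intervalIntegral.continuousOn_primitive_interval' hf Set.left_mem_uIcc).mono
    (Set.uIcc_subset_uIcc_left hc)).intervalIntegrable

lemma integral_integral_comp_sub {F : Type*} [NormedAddCommGroup F] [NormedSpace ℝ F]
    (f : ℝ → F) (a b : ℝ) :
    ∫ u in a..b, ∫ v in u..b, f (v - u) = ∫ x in (0 : ℝ)..b - a, ∫ y in (0 : ℝ)..x, f y := by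
  simp only [intervalIntegral.integral_comp_sub_right, sub_self,
    intervalIntegral.integral_comp_sub_left fun x => ∫ y in (0 : ℝ)..x, f y]

section Primitive

variable {f : ℝ → ℝ} {a b c : ℝ}

/-- Monotonicity of the means `(c - a)⁻¹ * ∫ x in a..c, f x`, multiplied out to allow `c = a`. -/
lemma sub_mul_integral_le_of_antitoneOn (hf : AntitoneOn f (Set.Icc a b)) (hc : c ∈ Set.Icc a b) :
    (c - a) * ∫ x in a..b, f x ≤ (b - a) * ∫ x in a..c, f x := by
  obtain ⟨hac, hcb⟩ := hc
  have hint_left : IntervalIntegrable f volume a c := by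
    refine AntitoneOn.intervalIntegrable ?_
    rw [Set.uIcc_of_le hac]
    exact hf.mono (Set.Icc_subset_Icc_right hcb)
  have hint_right : IntervalIntegrable f volume c b := by
    refine AntitoneOn.intervalIntegrable ?_
    rw [Set.uIcc_of_le hcb]
    exact hf.mono (Set.Icc_subset_Icc_left hac)
  have hleft : (c - a) * f c ≤ ∫ x in a..c, f x := by
    simpa using intervalIntegral.integral_mono_on hac intervalIntegrable_const hint_left
      fun x hx => hf ⟨hx.1, hx.2.trans hcb⟩ ⟨hac, hcb⟩ hx.2
  have hright : ∫ x in c..b, f x ≤ (b - c) * f c := by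
    simpa using intervalIntegral.integral_mono_on hcb hint_right intervalIntegrable_const
      fun x hx => hf ⟨hac, hcb⟩ ⟨hac.trans hx.1, hx.2⟩ hx.1
  rw [← intervalIntegral.integral_add_adjacent_intervals hint_left hint_right]
  linarith [mul_le_mul_of_nonneg_left hleft (sub_nonneg.2 hcb),
    mul_le_mul_of_nonneg_left hright (sub_nonneg.2 hac)]

lemma sq_mul_integral_le_of_antitoneOn (hf : AntitoneOn f (Set.Icc a b))
    (hc : c ∈ Set.Icc a b) :
    (c - a) ^ 2 * ∫ x in a..b, f x ≤ 2 * (b - a) * ∫ x in a..c, ∫ y in a..x, f y := by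
  have huIcc : Set.uIcc a b = Set.Icc a b := Set.uIcc_of_le (hc.1.trans hc.2)
  have hint := intervalIntegrable_primitive (huIcc ▸ hf).intervalIntegrable (huIcc ▸ hc)
  have hmono : ∫ x in a..c, (x - a) * ∫ y in a..b, f y
      ≤ ∫ x in a..c, (b - a) * ∫ y in a..x, f y :=
    intervalIntegral.integral_mono_on hc.1 (Continuous.intervalIntegrable (by fun_prop) a c)
      (hint.const_mul _) fun x hx => sub_mul_integral_le_of_antitoneOn hf ⟨hx.1, hx.2.trans hc.2⟩
  have hlinear : ∫ x in a..c, (x - a) = (c - a) ^ 2 / 2 := by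
    simp [intervalIntegral.integral_comp_sub_right fun x => x]
  rw [intervalIntegral.integral_mul_const, intervalIntegral.integral_const_mul, hlinear] at hmono
  linarith

lemma integral_primitive_le_of_nonneg (hf : IntervalIntegrable f volume a b)
    (hnonneg : ∀ x ∈ Set.Icc a b, 0 ≤ f x) (hc : c ∈ Set.Icc a b) :
    ∫ x in a..c, ∫ y in a..x, f y ≤ (c - a) * ∫ x in a..b, f x := by
  have hint := intervalIntegrable_primitive hf (Set.Icc_subset_uIcc hc)
  have hnonneg_ae : 0 ≤ᵐ[volume.restrict (Set.Ioc a b)] f :=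
    (ae_restrict_mem measurableSet_Ioc).mono fun x hx => hnonneg x (Set.Ioc_subset_Icc_self hx)
  simpa using intervalIntegral.integral_mono_on hc.1 hint intervalIntegrable_const fun x hx =>
    intervalIntegral.integral_mono_interval le_rfl hx.1 (hx.2.trans hc.2) hnonneg_ae hf

end Primitive

section Semigroup

variable {𝕜 E : Type*} [RCLike 𝕜] [SeminormedAddCommGroup E] {P : ℝ → E → E}
  (hsemi : ∀ s t, 0 ≤ s → 0 ≤ t → P (s + t) = P s ∘ P t)

include hsemi

lemma antitoneOn_norm_semigroup (hcontr : ∀ t, 0 ≤ t → ∀ x, ‖P t x‖ ≤ ‖x‖) (x : E) :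
    AntitoneOn (fun t => ‖P t x‖) (Set.Ici 0) := by
  intro s hs t _ hst
  calc ‖P t x‖ = ‖P (t - s) (P s x)‖ := by
        rw [← Function.comp_apply (f := P (t - s)), ← hsemi _ _ (sub_nonneg.2 hst) hs,
          sub_add_cancel]
    _ ≤ ‖P s x‖ := hcontr _ (sub_nonneg.2 hst) _

variable [InnerProductSpace 𝕜 E]
  (hsymm : ∀ t, 0 ≤ t → ∀ x y, inner 𝕜 (P t x) y = inner 𝕜 x (P t y))

include hsymm

lemma re_inner_symmetric_semigroup_eq_norm_half_sq (x : E) {s : ℝ} (hs : 0 ≤ s) :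
    RCLike.re (inner 𝕜 (P s x) x) = ‖P (s / 2) x‖ ^ 2 := by
  have hhalf : 0 ≤ s / 2 := by positivity
  calc RCLike.re (inner 𝕜 (P s x) x)
      = RCLike.re (inner 𝕜 (P (s / 2) (P (s / 2) x)) x) := by
        rw [← Function.comp_apply (f := P (s / 2)), ← hsemi _ _ hhalf hhalf, add_halves]
    _ = ‖P (s / 2) x‖ ^ 2 := by rw [hsymm _ hhalf, inner_self_eq_norm_sq]

lemma re_inner_symmetric_semigroup_nonneg (x : E) {s : ℝ} (hs : 0 ≤ s) :
    0 ≤ RCLike.re (inner 𝕜 (P s x) x) := by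
  rw [re_inner_symmetric_semigroup_eq_norm_half_sq hsemi hsymm x hs]
  positivity

lemma antitoneOn_re_inner_symmetric_semigroup
    (hcontr : ∀ t, 0 ≤ t → ∀ x, ‖P t x‖ ≤ ‖x‖) (x : E) :
    AntitoneOn (fun s => RCLike.re (inner 𝕜 (P s x) x)) (Set.Ici 0) := by
  intro s hs t ht hst
  have hnorm : ‖P (t / 2) x‖ ≤ ‖P (s / 2) x‖ :=
    antitoneOn_norm_semigroup hsemi hcontr x (Set.mem_Ici.2 (div_nonneg hs zero_le_two))
      (Set.mem_Ici.2 (div_nonneg ht zero_le_two)) (by gcongr)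
  simp only [re_inner_symmetric_semigroup_eq_norm_half_sq hsemi hsymm x hs,
    re_inner_symmetric_semigroup_eq_norm_half_sq hsemi hsymm x ht]
  gcongr

lemma two_mul_integral_norm_sq_symmetric_semigroup (x : E) {t : ℝ} (ht : 0 ≤ t) :
    2 * ∫ s in (0 : ℝ)..t, ‖P s x‖ ^ 2 = ∫ s in (0 : ℝ)..2 * t, RCLike.re (inner 𝕜 (P s x) x) := by
  have hcongr : ∫ s in (0 : ℝ)..2 * t, RCLike.re (inner 𝕜 (P s x) x)
      = ∫ s in (0 : ℝ)..2 * t, ‖P (s / 2) x‖ ^ 2 := by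
    refine intervalIntegral.integral_congr fun s hs => ?_
    rw [Set.uIcc_of_le (by positivity)] at hs
    exact re_inner_symmetric_semigroup_eq_norm_half_sq hsemi hsymm x hs.1
  rw [hcongr, intervalIntegral.integral_comp_div (fun s => ‖P s x‖ ^ 2) two_ne_zero, zero_div,
    mul_div_cancel_left₀ t two_ne_zero, smul_eq_mul]

end Semigroup

theorem stmt_14_general {𝕜 E : Type*} [RCLike 𝕜] [SeminormedAddCommGroup E]
    [InnerProductSpace 𝕜 E] {P : ℝ → E → E}
    (hsemi : ∀ s t, 0 ≤ s → 0 ≤ t → P (s + t) = P s ∘ P t)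
    (hsymm : ∀ t, 0 ≤ t → ∀ x y, inner 𝕜 (P t x) y = inner 𝕜 x (P t y))
    (hcontr : ∀ t, 0 ≤ t → ∀ x, ‖P t x‖ ≤ ‖x‖) (φ : E) {t : ℝ} (ht : 0 ≤ t) :
    t * (∫ s in (0 : ℝ)..t, ‖P s φ‖ ^ 2)
      ≤ 2 * ∫ u in (0 : ℝ)..t, ∫ v in u..t, RCLike.re (inner 𝕜 (P (v - u) φ) φ) ∧
    2 * (∫ u in (0 : ℝ)..t, ∫ v in u..t, RCLike.re (inner 𝕜 (P (v - u) φ) φ))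
      ≤ 4 * t * ∫ s in (0 : ℝ)..t, ‖P s φ‖ ^ 2 := by
  rcases ht.eq_or_lt with rfl | htpos
  · simp
  have hmem : t ∈ Set.Icc 0 (2 * t) := ⟨ht, by linarith⟩
  have hanti : AntitoneOn (fun s => RCLike.re (inner 𝕜 (P s φ) φ)) (Set.Icc 0 (2 * t)) :=
    (antitoneOn_re_inner_symmetric_semigroup hsemi hsymm hcontr φ).mono
      Set.Icc_subset_Ici_self
  have hint : IntervalIntegrable (fun s => RCLike.re (inner 𝕜 (P s φ) φ)) volume 0 (2 * t) :=
    AntitoneOn.intervalIntegrable (by rwa [Set.uIcc_of_le (hmem.1.trans hmem.2)])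
  have hlower := sq_mul_integral_le_of_antitoneOn hanti hmem
  have hupper := integral_primitive_le_of_nonneg hint
    (fun s hs => re_inner_symmetric_semigroup_nonneg hsemi hsymm φ hs.1) hmem
  rw [← two_mul_integral_norm_sq_symmetric_semigroup hsemi hsymm φ ht, sub_zero]
    at hlower hupper
  rw [integral_integral_comp_sub fun s => RCLike.re (inner 𝕜 (P s φ) φ), sub_zero]
  refine ⟨le_of_mul_le_mul_left ?_ (mul_pos two_pos htpos), ?_⟩ <;> linarith

/-- Theorem 7.2 (Hilbert-space form): for a self-adjoint contraction semigroup `P`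
on a real inner product space `E`, `φ ∈ E`, with `t ↦ P(t)φ` continuous on `[0,∞)`,
setting `A(t) = ∫_0^t ‖P(s)φ‖² ds` and `B(t) = 2∫_0^t ∫_u^t ⟪P(v−u)φ, φ⟫ dv du`,
one has `(1/8) t A(t) ≤ B(t) ≤ 4 t A(t)` for every `t ≥ 0`. -/
theorem stmt_14 {E : Type*} [NormedAddCommGroup E] [InnerProductSpace ℝ E]
    (φ : E) (P : ℝ → (E →L[ℝ] E))
    (hid : P 0 = ContinuousLinearMap.id ℝ E)
    (hsemi : ∀ s t : ℝ, 0 ≤ s → 0 ≤ t → P (s + t) = (P s).comp (P t))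
    (hsa : ∀ t : ℝ, 0 ≤ t → ∀ x y : E, ⟪P t x, y⟫ = ⟪x, P t y⟫)
    (hcontr : ∀ t : ℝ, 0 ≤ t → ∀ x : E, ‖P t x‖ ≤ ‖x‖)
    (hcont : ContinuousOn (fun t => P t φ) (Set.Ici 0))
    (t : ℝ) (ht : 0 ≤ t) :
    (1 / 8) * t * (∫ s in (0 : ℝ)..t, ‖P s φ‖ ^ 2)
      ≤ 2 * ∫ u in (0 : ℝ)..t, ∫ v in u..t, ⟪P (v - u) φ, φ⟫ ∧
    2 * (∫ u in (0 : ℝ)..t, ∫ v in u..t, ⟪P (v - u) φ, φ⟫)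
      ≤ 4 * t * ∫ s in (0 : ℝ)..t, ‖P s φ‖ ^ 2 := by
  obtain ⟨hlower, hupper⟩ := stmt_14_general (𝕜 := ℝ) (P := fun s => P s)
    (fun s t hs ht => by rw [hsemi s t hs ht, ContinuousLinearMap.coe_comp]) hsa hcontr φ ht
  have hnonneg : 0 ≤ t * ∫ s in (0 : ℝ)..t, ‖P s φ‖ ^ 2 :=
    mul_nonneg ht (intervalIntegral.integral_nonneg ht fun s _ => sq_nonneg _)
  refine ⟨le_trans ?_ hlower, hupper⟩
  linarith [hnonneg]
end

section
/- Let E be a real inner product space, φ ∈ E, and let P : [0,∞) → (E →L[ℝ] E) satisfy: P(0) = id; P(s+t) = P(s) ∘ P(t) for all s, t ≥ 0; ⟨P(t)x, y⟩ = ⟨x, P(t)y⟩ for all t ≥ 0 and x, y ∈ E; and t ↦ P(t)φ is continuous on [0,∞). Define A(t) := ∫_0^t ‖P(s)φ‖² ds and B(t) := 2∫_0^t ∫_u^t ⟨P(v−u)φ, φ⟩ dv du. Then for every t ≥ 0, B(t) = 4 ∫_0^t A(s/2) ds. -/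
open MeasureTheory
open scoped RealInnerProductSpace

theorem intervalIntegral_intervalIntegral_comp_sub {F : Type*} [NormedAddCommGroup F]
    [NormedSpace ℝ F] (f : ℝ → F) (a b : ℝ) :
    ∫ u in a..b, ∫ v in u..b, f (v - u) = ∫ s in (0 : ℝ)..(b - a), ∫ w in (0 : ℝ)..s, f w := by
  calc
    ∫ u in a..b, ∫ v in u..b, f (v - u)
      = ∫ u in a..b, ∫ w in (0 : ℝ)..(b - u), f w := by
        simp only [intervalIntegral.integral_comp_sub_right, sub_self]
    _ = ∫ s in (0 : ℝ)..(b - a), ∫ w in (0 : ℝ)..s, f w := by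
        rw [intervalIntegral.integral_comp_sub_left (fun s => ∫ w in (0 : ℝ)..s, f w), sub_self]

/-- A one-parameter semigroup `(P t)` for `t > 0` of symmetric operators, defined on all of a real
or complex inner product space. Time is encoded as a real number, so the values `P t` with `t ≤ 0`
are unconstrained. -/
structure IsSymmetricSemigroup {𝕜 E : Type*} [RCLike 𝕜] [SeminormedAddCommGroup E]
    [InnerProductSpace 𝕜 E] (P : ℝ → E →ₗ[𝕜] E) : Prop where
  map_add : ∀ s t : ℝ, 0 < s → 0 < t → P (s + t) = P s ∘ₗ P t
  isSymmetric : ∀ t : ℝ, 0 < t → (P t).IsSymmetric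

namespace IsSymmetricSemigroup

variable {𝕜 E : Type*} [RCLike 𝕜] [SeminormedAddCommGroup E] [InnerProductSpace 𝕜 E]
  {P : ℝ → E →ₗ[𝕜] E}

theorem inner_apply_self_eq_norm_half_sq (hP : IsSymmetricSemigroup P) {w : ℝ} (hw : 0 < w)
    (x : E) :
    inner 𝕜 (P w x) x = ((‖P (w / 2) x‖ ^ 2 : ℝ) : 𝕜) := by
  have hw_half : 0 < w / 2 := half_pos hw
  calc
    inner 𝕜 (P w x) x = inner 𝕜 (P (w / 2) (P (w / 2) x)) x := by
      rw [← LinearMap.comp_apply, ← hP.map_add _ _ hw_half hw_half, add_halves]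
    _ = inner 𝕜 (P (w / 2) x) (P (w / 2) x) := hP.isSymmetric _ hw_half _ _
    _ = ((‖P (w / 2) x‖ ^ 2 : ℝ) : 𝕜) := by
      rw [inner_self_eq_norm_sq_to_K, RCLike.ofReal_pow]

theorem integral_inner_apply_self_eq_integral_norm_sq (hP : IsSymmetricSemigroup P) {s : ℝ}
    (hs : 0 ≤ s) (x : E) :
    ∫ w in (0 : ℝ)..s, inner 𝕜 (P w x) x
      = ((2 * ∫ r in (0 : ℝ)..(s / 2), ‖P r x‖ ^ 2 : ℝ) : 𝕜) := by
  calc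
    ∫ w in (0 : ℝ)..s, inner 𝕜 (P w x) x
      = ∫ w in (0 : ℝ)..s, ((‖P (w / 2) x‖ ^ 2 : ℝ) : 𝕜) :=
        intervalIntegral.integral_congr_Ioo_of_le hs fun _ hw =>
          hP.inner_apply_self_eq_norm_half_sq hw.1 x
    _ = ((∫ w in (0 : ℝ)..s, ‖P (w / 2) x‖ ^ 2 : ℝ) : 𝕜) :=
        RCLike.intervalIntegral_ofReal
    _ = ((2 * ∫ r in (0 : ℝ)..(s / 2), ‖P r x‖ ^ 2 : ℝ) : 𝕜) := by
        rw [intervalIntegral.integral_comp_div (fun r => ‖P r x‖ ^ 2) two_ne_zero, zero_div,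
          smul_eq_mul]

end IsSymmetricSemigroup

theorem stmt_15_general {𝕜 E : Type*} [RCLike 𝕜] [SeminormedAddCommGroup E]
    [InnerProductSpace 𝕜 E] {P : ℝ → E →ₗ[𝕜] E} (hP : IsSymmetricSemigroup P) (φ : E)
    {t : ℝ} (ht : 0 ≤ t) :
    2 * (∫ u in (0 : ℝ)..t, ∫ v in u..t, inner 𝕜 (P (v - u) φ) φ)
      = ((4 * ∫ s in (0 : ℝ)..t, ∫ r in (0 : ℝ)..(s / 2), ‖P r φ‖ ^ 2 : ℝ) : 𝕜) := by
  calc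
    2 * (∫ u in (0 : ℝ)..t, ∫ v in u..t, inner 𝕜 (P (v - u) φ) φ)
      = 2 * ∫ s in (0 : ℝ)..t, ∫ w in (0 : ℝ)..s, inner 𝕜 (P w φ) φ := by
        rw [intervalIntegral_intervalIntegral_comp_sub (fun w => inner 𝕜 (P w φ) φ), sub_zero]
    _ = 2 * ∫ s in (0 : ℝ)..t, ((2 * ∫ r in (0 : ℝ)..(s / 2), ‖P r φ‖ ^ 2 : ℝ) : 𝕜) := by
        congr 1
        exact intervalIntegral.integral_congr_Ioo_of_le ht fun _ hs =>
          hP.integral_inner_apply_self_eq_integral_norm_sq hs.1.le φ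
    _ = ((4 * ∫ s in (0 : ℝ)..t, ∫ r in (0 : ℝ)..(s / 2), ‖P r φ‖ ^ 2 : ℝ) : 𝕜) := by
        rw [RCLike.intervalIntegral_ofReal, intervalIntegral.integral_const_mul]
        push_cast
        ring

/-- Proposition 7.4 (Hilbert-space form): for a self-adjoint semigroup `P` on a real
inner product space `E`, `φ ∈ E`, with `t ↦ P(t)φ` continuous on `[0,∞)`, setting
`A(t) = ∫_0^t ‖P(s)φ‖² ds` and `B(t) = 2∫_0^t ∫_u^t ⟪P(v−u)φ, φ⟫ dv du`, one has
`B(t) = 4 ∫_0^t A(s/2) ds` for every `t ≥ 0`. -/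
theorem stmt_15 {E : Type*} [NormedAddCommGroup E] [InnerProductSpace ℝ E]
    (φ : E) (P : ℝ → (E →L[ℝ] E))
    (hid : P 0 = ContinuousLinearMap.id ℝ E)
    (hsemi : ∀ s t : ℝ, 0 ≤ s → 0 ≤ t → P (s + t) = (P s).comp (P t))
    (hsa : ∀ t : ℝ, 0 ≤ t → ∀ x y : E, ⟪P t x, y⟫ = ⟪x, P t y⟫)
    (hcont : ContinuousOn (fun t => P t φ) (Set.Ici 0))
    (t : ℝ) (ht : 0 ≤ t) :
    2 * (∫ u in (0 : ℝ)..t, ∫ v in u..t, ⟪P (v - u) φ, φ⟫)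
      = 4 * ∫ s in (0 : ℝ)..t, (∫ r in (0 : ℝ)..(s / 2), ‖P r φ‖ ^ 2) := by
  have hP : IsSymmetricSemigroup fun s => (P s : E →ₗ[ℝ] E) :=
    { map_add := fun r s hr hs => by
        rw [hsemi r s hr.le hs.le, ContinuousLinearMap.toLinearMap_comp]
      isSymmetric := fun s hs => hsa s hs.le }
  exact stmt_15_general hP φ ht
end
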